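/- arXiv:math/0305087 — 7 statements merged into one kernel-verified Lean document; each statement's English description precedes it below -/
import Mathlib

section
/- Let f : ℤ → ℕ ∪ {∞} be a function such that f⁻¹(0) is finite, and let Δ denote the cardinality of f⁻¹(0). Then there exists a sequence U = (u_k)_{k≥1} of integers such that for every integer n, f(n) equals the number (possibly infinite) of indices k ≥ 1 with u_k = n, and such that |u_k| ≤ ⌊(k + Δ)/2⌋ for every k ≥ 1. -/
/-- Position of the `i`-th copy of `n` in the enumeration of `ℤ × ℕ` by weight `|n| + i`. -/
def posOf (n : ℤ) (i : ℕ) : ℕ := (n.natAbs + i) ^ 2 + (n + n.natAbs).toNat + i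

/-- The integer at position `t`. -/
def valOf (t : ℕ) : ℤ := (t : ℤ) - (t.sqrt : ℤ) ^ 2 - t.sqrt

/-- The copy index at position `t`. -/
def idxOf (t : ℕ) : ℕ := t.sqrt - (valOf t).natAbs

lemma posOf_cast (n : ℤ) (i : ℕ) :
    (posOf n i : ℤ) = ((n.natAbs + i : ℕ) : ℤ) ^ 2 + n + (n.natAbs + i : ℕ) := by
  unfold posOf
  push_cast
  rw [Int.toNat_of_nonneg (by have := neg_abs_le n; linarith)]
  ring

lemma sqrt_posOf (n : ℤ) (i : ℕ) : (posOf n i).sqrt = n.natAbs + i := by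
  have h := posOf_cast n i
  symm
  rw [Nat.eq_sqrt]
  generalize hw : n.natAbs + i = w at *
  constructor
  · zify; nlinarith [show -(w : ℤ) ≤ n by omega]
  · zify; nlinarith [show n ≤ (w : ℤ) by omega]

lemma valOf_posOf (n : ℤ) (i : ℕ) : valOf (posOf n i) = n := by
  unfold valOf
  rw [sqrt_posOf, posOf_cast]; ring

lemma idxOf_posOf (n : ℤ) (i : ℕ) : idxOf (posOf n i) = i := by
  unfold idxOf
  rw [sqrt_posOf, valOf_posOf]; omega

lemma natAbs_valOf_le (t : ℕ) : (valOf t).natAbs ≤ t.sqrt := by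
  have h1 := Nat.sqrt_le t
  have h2 := Nat.sqrt_le_add t
  unfold valOf
  zify at h1 h2
  rw [pow_two]
  omega

lemma posOf_valOf (t : ℕ) : posOf (valOf t) (idxOf t) = t := by
  have h := natAbs_valOf_le t
  have h2 : (valOf t).natAbs + idxOf t = t.sqrt := by unfold idxOf; omega
  zify
  rw [posOf_cast, h2]
  unfold valOf; ring

lemma encard_lt (a : ℕ∞) : {i : ℕ | (i : ℕ∞) < a}.encard = a := by
  induction a using ENat.recTopCoe with
  | top =>
    have : {i : ℕ | (i : ℕ∞) < ⊤} = Set.univ := by ext i; simp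
    rw [this]; simp
  | coe a =>
    have : {i : ℕ | (i : ℕ∞) < a} = (Finset.range a : Set ℕ) := by ext i; simp
    rw [this, Set.encard_coe_eq_coe_finsetCard]; simp

theorem stmt0 (f : ℤ → ℕ∞) (hf : (f ⁻¹' {0}).Finite) (Δ : ℕ)
    (hΔ : (f ⁻¹' {0}).ncard = Δ) :
    ∃ u : ℕ → ℤ,
      (∀ n : ℤ, f n = {k : ℕ | 1 ≤ k ∧ u k = n}.encard) ∧
      (∀ k : ℕ, 1 ≤ k → (u k).natAbs ≤ (k + Δ) / 2) := by
  classical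
  set P : ℕ → Prop := fun t => (idxOf t : ℕ∞) < f (valOf t) with hP
  have hP0 : ∀ m, f m ≠ 0 → P (posOf m 0) := by
    intro m hm
    simp only [hP, idxOf_posOf, valOf_posOf]
    simpa [pos_iff_ne_zero] using hm
  have hinf : (setOf P).Infinite := by
    have h1 : (f ⁻¹' {0})ᶜ.Infinite := hf.infinite_compl
    have h2 : Set.InjOn (fun m => posOf m 0) (f ⁻¹' {0})ᶜ := by
      intro a _ b _ h
      have := congrArg valOf h
      simpa [valOf_posOf] using this
    refine (h1.image h2).mono ?_
    rintro _ ⟨m, hm, rfl⟩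
    exact hP0 m (by simpa using hm)
  refine ⟨fun k => valOf (Nat.nth P (k - 1)), ?_, ?_⟩
  · intro n
    have himg : {k : ℕ | 1 ≤ k ∧ valOf (Nat.nth P (k - 1)) = n}
        = (fun i => Nat.count P (posOf n i) + 1) '' {i : ℕ | (i : ℕ∞) < f n} := by
      ext k
      constructor
      · rintro ⟨hk, hv⟩
        have hm : P (Nat.nth P (k - 1)) := Nat.nth_mem_of_infinite hinf _
        refine ⟨idxOf (Nat.nth P (k - 1)), ?_, ?_⟩
        · simp only [hP] at hm
          rw [← hv]; exact hm
        · have h3 := posOf_valOf (Nat.nth P (k - 1))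
          rw [hv] at h3
          simp only [h3]
          rw [Nat.count_nth_of_infinite hinf]; omega
      · rintro ⟨i, hi, rfl⟩
        refine ⟨Nat.le_add_left _ _, ?_⟩
        have : P (posOf n i) := by
          simp only [hP, idxOf_posOf, valOf_posOf]; exact hi
        simp only [Nat.add_sub_cancel]
        rw [Nat.nth_count this, valOf_posOf]
    rw [himg, Set.InjOn.encard_image, encard_lt]
    intro i hi j hj h
    have pi : P (posOf n i) := by
      simp only [hP, idxOf_posOf, valOf_posOf]; exact hi
    have pj : P (posOf n j) := by
      simp only [hP, idxOf_posOf, valOf_posOf]; exact hj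
    have h' : Nat.count P (posOf n i) = Nat.count P (posOf n j) := by
      simpa using h
    have := congrArg idxOf (Nat.count_injective pi pj h')
    simpa [idxOf_posOf] using this
  · intro k hk
    simp only
    set t := Nat.nth P (k - 1) with ht
    have hc : Nat.count P t = k - 1 := Nat.count_nth_of_infinite hinf _
    set N := (valOf t).natAbs with hN
    have hNt : N ≤ t.sqrt := natAbs_valOf_le t
    let A : Finset ℤ := Finset.Ioo (-(N : ℤ)) N \ hf.toFinset
    have hA1 : (Finset.Ioo (-(N : ℤ)) N).card ≤ A.card + Δ := by
      have := Finset.card_le_card_sdiff_add_card (t := hf.toFinset)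
        (s := Finset.Ioo (-(N : ℤ)) N)
      rw [← Set.ncard_eq_toFinset_card _ hf, hΔ] at this
      exact this
    have hA2 : A.card ≤ k - 1 := by
      rw [← hc, Nat.count_eq_card_filter_range]
      apply Finset.card_le_card_of_injOn (fun m => posOf m 0)
      · intro m hm
        simp only [A, Finset.coe_sdiff, Set.mem_diff, Finset.mem_coe, Finset.mem_Ioo,
          Set.Finite.mem_toFinset, Set.mem_preimage, Set.mem_singleton_iff] at hm
        simp only [Finset.coe_filter, Finset.mem_range, Set.mem_setOf_eq]
        refine ⟨?_, hP0 m hm.2⟩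
        by_contra! hle
        have := Nat.sqrt_le_sqrt hle
        rw [sqrt_posOf] at this
        omega
      · intro a _ b _ h
        have := congrArg valOf h
        simpa [valOf_posOf] using this
    rw [Int.card_Ioo] at hA1
    omega
end

section
/- For every nonnegative integer Δ there exist a function f : ℤ → ℕ ∪ {∞} with card(f⁻¹(0)) = Δ and a sequence U = (u_k)_{k≥1} of integers such that for every integer n, f(n) equals the number of indices k ≥ 1 with u_k = n, and |u_k| = ⌊(k + Δ)/2⌋ for all k ≥ 1. (In this sense the bound |u_k| ≤ ⌊(k + Δ)/2⌋ of the enumeration lemma is best possible.) -/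
/-- The enumeration `0, 1, -1, 2, -2, …` of the integers, indexed from `1`. -/
def enumZ (m : ℕ) : ℤ := if m % 2 = 0 then (m / 2 : ℕ) else -((m / 2 : ℕ) : ℤ)

theorem stmt1 (Δ : ℕ) :
    ∃ (f : ℤ → ℕ∞) (u : ℕ → ℤ),
      (f ⁻¹' {0}).Finite ∧ (f ⁻¹' {0}).ncard = Δ ∧
      (∀ n : ℤ, f n = {k : ℕ | 1 ≤ k ∧ u k = n}.encard) ∧
      (∀ k : ℕ, 1 ≤ k → (u k).natAbs = (k + Δ) / 2) := by
  have inj : ∀ a b : ℕ, 1 ≤ a → 1 ≤ b → enumZ a = enumZ b → a = b := by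
    intro a b ha hb h
    unfold enumZ at h
    split_ifs at h <;> omega
  have surj : ∀ n : ℤ, ∃ m : ℕ, 1 ≤ m ∧ enumZ m = n := by
    intro n
    by_cases hn : 0 < n
    · refine ⟨2 * n.toNat, by omega, ?_⟩
      unfold enumZ
      split_ifs <;> omega
    · refine ⟨2 * (-n).toNat + 1, by omega, ?_⟩
      unfold enumZ
      split_ifs <;> omega
  have key : (fun n : ℤ => {k : ℕ | 1 ≤ k ∧ enumZ (k + Δ) = n}.encard) ⁻¹' {0}
      = ((Finset.Icc 1 Δ).image enumZ : Finset ℤ) := by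
    ext n
    simp only [Set.mem_preimage, Set.mem_singleton_iff, Set.encard_eq_zero,
      Set.eq_empty_iff_forall_notMem, Set.mem_setOf_eq, Finset.mem_coe, Finset.mem_image,
      Finset.mem_Icc]
    constructor
    · intro h
      obtain ⟨m, hm, rfl⟩ := surj n
      refine ⟨m, ⟨hm, ?_⟩, rfl⟩
      by_contra hlt
      exact h (m - Δ) ⟨by omega, by congr 1; omega⟩
    · rintro ⟨m, ⟨h1, h2⟩, rfl⟩ k ⟨hk, he⟩
      have := inj _ _ (by omega) h1 he
      omega
  refine ⟨fun n => {k : ℕ | 1 ≤ k ∧ enumZ (k + Δ) = n}.encard, fun k => enumZ (k + Δ),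
    ?_, ?_, fun n => rfl, ?_⟩
  · rw [key]; exact Finset.finite_toSet _
  · rw [key, Set.ncard_coe_finset, Finset.card_image_of_injOn]
    · simp
    · intro a ha b hb h
      simp only [Finset.coe_Icc, Set.mem_Icc] at ha hb
      exact inj a b ha.1 hb.1 h
  · intro k hk
    simp only [enumZ]
    split_ifs <;> omega
end

section
/- Let f : ℤ → ℕ ∪ {∞} be any function such that Δ = card(f⁻¹(0)) is finite, and let c = 8 + ⌊(Δ + 1)/2⌋. Then there exists a set A of integers such that r_{A,2}(n) = f(n) for all integers n, and such that the number of elements a ∈ A with |a| ≤ x is at least (x/c)^{1/3} for all real x ≥ 8c. -/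
/-- The representation function of order 2: the number (in `ℕ∞`) of ways to
write `n = a₁ + a₂` with `a₁, a₂ ∈ A` and `a₁ ≤ a₂`. -/
noncomputable def rep2 (A : Set ℤ) (n : ℤ) : ℕ∞ :=
  {p : ℤ × ℤ | p.1 ∈ A ∧ p.2 ∈ A ∧ p.1 ≤ p.2 ∧ p.1 + p.2 = n}.encard

theorem rep2_mono {A B : Set ℤ} (h : A ⊆ B) (n : ℤ) : rep2 A n ≤ rep2 B n := by
  apply Set.encard_le_encard
  rintro p ⟨h1, h2, h3, h4⟩
  exact ⟨h h1, h h2, h3, h4⟩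

theorem rep2_insert_le (A : Set ℤ) (a n : ℤ) : rep2 (insert a A) n ≤ rep2 A n + 1 := by
  have : {p : ℤ × ℤ | p.1 ∈ insert a A ∧ p.2 ∈ insert a A ∧ p.1 ≤ p.2 ∧ p.1 + p.2 = n} ⊆
      insert (min a (n - a), max a (n - a))
        {p : ℤ × ℤ | p.1 ∈ A ∧ p.2 ∈ A ∧ p.1 ≤ p.2 ∧ p.1 + p.2 = n} := by
    rintro ⟨x, y⟩ ⟨h1, h2, h3, h4⟩
    simp only [Set.mem_insert_iff, Set.mem_ofPred_eq, Prod.mk.injEq] at *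
    rcases h1 with h1 | h1
    · left; omega
    · rcases h2 with h2 | h2
      · left; omega
      · right; exact ⟨h1, h2, h3, h4⟩
  exact (Set.encard_le_encard this).trans (Set.encard_insert_le _ _)

theorem rep2_insert_eq (A : Set ℤ) (a n : ℤ) (h : n - a ∉ insert a A) :
    rep2 (insert a A) n ≤ rep2 A n := by
  apply Set.encard_le_encard
  rintro ⟨x, y⟩ ⟨h1, h2, h3, h4⟩
  simp only [Set.mem_insert_iff, Set.mem_ofPred_eq, not_or] at *
  rcases h1 with h1 | h1
  · exfalso
    have : y = n - a := by omega
    subst this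
    tauto
  · rcases h2 with h2 | h2
    · exfalso
      have : x = n - a := by omega
      subst this
      tauto
    · exact ⟨h1, h2, h3, h4⟩

theorem rep2_zero (A : Set ℤ) (n : ℤ) (h : ∀ x ∈ A, ∀ y ∈ A, x + y ≠ n) : rep2 A n = 0 := by
  unfold rep2
  rw [Set.encard_eq_zero, Set.eq_empty_iff_forall_notMem]
  rintro p ⟨h1, h2, h3, h4⟩
  exact h _ h1 _ h2 h4

theorem rep2_insert_bound (f : ℤ → ℕ∞) (A : Set ℤ) (a : ℤ) (hA : ∀ n, rep2 A n ≤ f n)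
    (h : ∀ y ∈ insert a A, rep2 A (a + y) < f (a + y)) (n : ℤ) :
    rep2 (insert a A) n ≤ f n := by
  by_cases hn : n - a ∈ insert a A
  · have := h _ hn
    rw [add_sub_cancel] at this
    exact (rep2_insert_le A a n).trans (Order.add_one_le_of_lt this)
  · exact (rep2_insert_eq A a n hn).trans (hA n)

theorem rep2_insert_ge (A : Set ℤ) (b a : ℤ) (ha : a ∈ A) (hb : b ∉ A) :
    rep2 A (a + b) + 1 ≤ rep2 (insert b A) (a + b) := by
  have hnot : (min a b, max a b) ∉
      {p : ℤ × ℤ | p.1 ∈ A ∧ p.2 ∈ A ∧ p.1 ≤ p.2 ∧ p.1 + p.2 = a + b} := by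
    rintro ⟨h1, h2, -, -⟩
    rcases le_total a b with h | h
    · rw [max_eq_right h] at h2; exact hb h2
    · rw [min_eq_right h] at h1; exact hb h1
  unfold rep2
  rw [← Set.encard_insert_of_notMem hnot]
  apply Set.encard_le_encard
  rintro p (rfl | ⟨h1, h2, h3, h4⟩)
  · refine ⟨?_, ?_, min_le_max, min_add_max a b⟩
    · rcases le_total a b with h | h <;> simp [h, ha]
    · rcases le_total a b with h | h <;> simp [h, ha]
  · exact ⟨Or.inr h1, Or.inr h2, h3, h4⟩

theorem exists_good (A W : Finset ℤ) (u : ℤ) (N : ℕ)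
    (hN : 2 * (A.card + 1) * W.card + (A.card + 1) ^ 2 < 2 * N + 1) :
    ∃ a : ℤ, |a| ≤ N ∧ 2 * a ∉ W ∧ (∀ y ∈ A, a + y ∉ W) ∧ 2 * a ≠ u ∧
      (∀ y ∈ A, u - a + y ∉ W) ∧ (∀ y ∈ A, ∀ z ∈ A, u - a + y ≠ a + z) ∧
      (∀ y ∈ A, u - a + y ≠ 2 * a) ∧ 2 * (u - a) ∉ W ∧ (∀ z ∈ A, 2 * (u - a) ≠ a + z) := by
  classical
  let b1 := W.image (fun w => w / 2)
  let b2 := Finset.image₂ (fun y w => w - y) A W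
  let b3 := Finset.image₂ (fun y w => u + y - w) A W
  let b4 := Finset.image₂ (fun y z => (u + y - z) / 2) A A
  let b5 := A.image (fun y => (u + y) / 3)
  let b6 := W.image (fun w => (2 * u - w) / 2)
  let b7 := A.image (fun y => (2 * u - y) / 3)
  let bad := insert (u / 2) (b1 ∪ (b2 ∪ (b3 ∪ (b4 ∪ (b5 ∪ (b6 ∪ b7))))))
  have c1 : b1.card ≤ W.card := Finset.card_image_le
  have c2 : b2.card ≤ A.card * W.card := Finset.card_image₂_le _ _ _
  have c3 : b3.card ≤ A.card * W.card := Finset.card_image₂_le _ _ _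
  have c4 : b4.card ≤ A.card * A.card := Finset.card_image₂_le _ _ _
  have c5 : b5.card ≤ A.card := Finset.card_image_le
  have c6 : b6.card ≤ W.card := Finset.card_image_le
  have c7 : b7.card ≤ A.card := Finset.card_image_le
  have hbad : bad.card < 2 * N + 1 := by
    have e0 := Finset.card_insert_le (u / 2) (b1 ∪ (b2 ∪ (b3 ∪ (b4 ∪ (b5 ∪ (b6 ∪ b7))))))
    have e1 := Finset.card_union_le b1 (b2 ∪ (b3 ∪ (b4 ∪ (b5 ∪ (b6 ∪ b7)))))
    have e2 := Finset.card_union_le b2 (b3 ∪ (b4 ∪ (b5 ∪ (b6 ∪ b7))))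
    have e3 := Finset.card_union_le b3 (b4 ∪ (b5 ∪ (b6 ∪ b7)))
    have e4 := Finset.card_union_le b4 (b5 ∪ (b6 ∪ b7))
    have e5 := Finset.card_union_le b5 (b6 ∪ b7)
    have e6 := Finset.card_union_le b6 b7
    have : bad.card ≤ 2 * (A.card + 1) * W.card + (A.card + 1) ^ 2 := by
      have : 2 * (A.card + 1) * W.card + (A.card + 1) ^ 2 =
        2 * (A.card * W.card) + 2 * W.card + A.card * A.card + 2 * A.card + 1 := by ring
      rw [this]
      change (insert (u / 2) (b1 ∪ (b2 ∪ (b3 ∪ (b4 ∪ (b5 ∪ (b6 ∪ b7))))))).card ≤ _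
      omega
    omega
  have hI : (Finset.Icc (-(N : ℤ)) N).card = 2 * N + 1 := by
    rw [Int.card_Icc]; omega
  obtain ⟨a, ha, hab⟩ := Finset.exists_mem_notMem_of_card_lt_card (hI ▸ hbad)
  simp only [bad, Finset.mem_insert, Finset.mem_union, not_or] at hab
  obtain ⟨h0, h1, h2, h3, h4, h5, h6, h7⟩ := hab
  rw [Finset.mem_Icc] at ha
  refine ⟨a, abs_le.2 ha, ?_, ?_, ?_, ?_, ?_, ?_, ?_, ?_⟩
  · intro h; exact h1 (Finset.mem_image.2 ⟨_, h, by omega⟩)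
  · intro y hy h; exact h2 (Finset.mem_image₂.2 ⟨_, hy, _, h, by omega⟩)
  · omega
  · intro y hy h; exact h3 (Finset.mem_image₂.2 ⟨_, hy, _, h, by omega⟩)
  · intro y hy z hz h; exact h4 (Finset.mem_image₂.2 ⟨_, hy, _, hz, by omega⟩)
  · intro y hy h; exact h5 (Finset.mem_image.2 ⟨_, hy, by omega⟩)
  · intro h; exact h6 (Finset.mem_image.2 ⟨_, h, by omega⟩)
  · intro y hy h; exact h7 (Finset.mem_image.2 ⟨_, hy, by omega⟩)

theorem extend_pair (f : ℤ → ℕ∞) (Z A : Finset ℤ) (hZ : ∀ n, f n = 0 → n ∈ Z) (u : ℤ) (N : ℕ)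
    (hN : 2 * (A.card + 1) * (Z.card + A.card * A.card) + (A.card + 1) ^ 2 < 2 * N + 1)
    (hA : ∀ n, rep2 A n ≤ f n) (hu : rep2 A u < f u) :
    ∃ B : Finset ℤ, A ⊆ B ∧ B.card = A.card + 2 ∧ (∀ b ∈ B, b ∈ A ∨ |b| ≤ N + |u|) ∧
      (∀ n, rep2 B n ≤ f n) ∧ rep2 A u + 1 ≤ rep2 B u := by
  classical
  let W := Z ∪ Finset.image₂ (fun x y => x + y) A A
  have hW : W.card ≤ Z.card + A.card * A.card :=
    (Finset.card_union_le _ _).trans (Nat.add_le_add_left (Finset.card_image₂_le _ _ _) _)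
  have hfpos : ∀ n, n ∉ W → 0 < f n := by
    intro n hn
    rw [pos_iff_ne_zero]
    intro h
    exact hn (Finset.mem_union_left _ (hZ n h))
  have hsum : ∀ n, n ∉ W → ∀ x ∈ A, ∀ y ∈ A, x + y ≠ n := by
    intro n hn x hx y hy h
    exact hn (Finset.mem_union_right _ (Finset.mem_image₂.2 ⟨x, hx, y, hy, h⟩))
  obtain ⟨a, hab, g1, g2, g3, g4, g5, g6, g7, g8⟩ := exists_good A W u N (by
    refine lt_of_le_of_lt ?_ hN
    gcongr)
  have haA : a ∉ A := fun h => hsum _ g1 a h a h (by ring)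
  have hbA : u - a ∉ A := fun h => hsum _ g7 _ h _ h (by ring)
  have hbA' : u - a ∉ insert a (A : Set ℤ) := by
    rintro (h | h)
    · omega
    · exact hbA (by simpa using h)
  have hA' : ∀ n, rep2 (insert a (A : Set ℤ)) n ≤ f n := by
    apply rep2_insert_bound f _ _ hA
    intro y hy
    have : a + y ∉ W := by
      rcases hy with rfl | hy
      · rwa [← two_mul]
      · exact g2 y (by simpa using hy)
    rw [rep2_zero _ _ (fun x hx z hz => hsum _ this x (by simpa using hx) z (by simpa using hz))]
    exact hfpos _ this
  have hB : ∀ n, rep2 (insert (u - a) (insert a (A : Set ℤ))) n ≤ f n := by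
    apply rep2_insert_bound f _ _ hA'
    intro y hy
    by_cases hya : y = a
    · subst hya
      rw [sub_add_cancel]
      exact lt_of_le_of_lt (rep2_insert_eq _ _ _ hbA') hu
    · have key : u - a + y ∉ W ∧ u - a + y ≠ 2 * a ∧ ∀ z ∈ A, u - a + y ≠ a + z := by
        rcases hy with rfl | hy | hy
        · rw [← two_mul]
          exact ⟨g7, by omega, g8⟩
        · exact absurd hy hya
        · have hy' : y ∈ A := by simpa using hy
          exact ⟨g4 y hy', g6 y hy', g5 y hy'⟩
      obtain ⟨k1, k2, k3⟩ := key
      rw [rep2_zero]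
      · exact hfpos _ k1
      · intro x hx z hz hxz
        rcases hx with rfl | hx
        · rcases hz with rfl | hz
          · omega
          · exact k3 z (by simpa using hz) hxz.symm
        · rcases hz with rfl | hz
          · exact k3 x (by simpa using hx) (by omega)
          · exact hsum _ k1 x (by simpa using hx) z (by simpa using hz) hxz
  have hcast : ((insert (u - a) (insert a A) : Finset ℤ) : Set ℤ) =
      insert (u - a) (insert a (A : Set ℤ)) := by simp
  refine ⟨insert (u - a) (insert a A), ?_, ?_, ?_, ?_, ?_⟩
  · intro x hx; simp [hx]
  · rw [Finset.card_insert_of_notMem, Finset.card_insert_of_notMem haA]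
    intro h
    exact hbA' (by simpa using h)
  · intro b hb
    simp only [Finset.mem_insert] at hb
    rcases hb with rfl | rfl | hb
    · right
      have := abs_sub u a
      linarith
    · right
      have := abs_nonneg u
      linarith
    · exact Or.inl hb
  · rw [hcast]; exact hB
  · rw [hcast]
    have h1 := rep2_insert_ge (insert a (A : Set ℤ)) (u - a) a (Set.mem_insert _ _) hbA'
    rw [add_sub_cancel] at h1
    refine le_trans ?_ h1
    gcongr
    exact rep2_mono (Set.subset_insert _ _) u

def GoodSet (f : ℤ → ℕ∞) (c k : ℕ) (A : Finset ℤ) : Prop :=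
  A.card = 2 * k ∧ (∀ a ∈ A, |a| ≤ ((8 * c * (max 1 (k - 1)) ^ 3 : ℕ) : ℤ)) ∧
    ∀ n, rep2 A n ≤ f n

theorem good_step (f : ℤ → ℕ∞) (Z : Finset ℤ) (hZ : ∀ n, f n = 0 → n ∈ Z) (c k : ℕ)
    (hc : c = 8 + (Z.card + 1) / 2) (A : Finset ℤ) (hA : GoodSet f c k A) (t : ℤ)
    (ht : |t| ≤ k) :
    ∃ B, GoodSet f c (k + 1) B ∧ A ⊆ B ∧ (rep2 A t < f t → rep2 A t + 1 ≤ rep2 B t) := by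
  classical
  obtain ⟨h1, h2, h3⟩ := hA
  -- choose the number to be represented
  have hu : ∃ u : ℤ, |u| ≤ ((Z.card + 4 * k ^ 2 + k : ℕ) : ℤ) ∧ rep2 A u < f u ∧
      (rep2 A t < f t → u = t) := by
    by_cases h : rep2 A t < f t
    · refine ⟨t, ?_, h, fun _ => rfl⟩
      push_cast
      nlinarith
    · let W := Z ∪ Finset.image₂ (fun x y => x + y) A A
      have hW : W.card ≤ Z.card + A.card * A.card :=
        (Finset.card_union_le _ _).trans (Nat.add_le_add_left (Finset.card_image₂_le _ _ _) _)
      have hlt : W.card < (Finset.Icc (0 : ℤ) (Z.card + 4 * k ^ 2 + k : ℕ)).card := by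
        rw [Int.card_Icc]
        have : A.card * A.card = 4 * k ^ 2 := by rw [h1]; ring
        omega
      obtain ⟨u, hu, huW⟩ := Finset.exists_mem_notMem_of_card_lt_card hlt
      rw [Finset.mem_Icc] at hu
      refine ⟨u, abs_le.2 ⟨by omega, hu.2⟩, ?_, fun h' => absurd h' h⟩
      rw [rep2_zero, pos_iff_ne_zero]
      · intro h
        exact huW (Finset.mem_union_left _ (hZ u h))
      · intro x hx y hy h
        exact huW (Finset.mem_union_right _
          (Finset.mem_image₂.2 ⟨x, by simpa using hx, y, by simpa using hy, h⟩))
  obtain ⟨u, hu1, hu2, hu3⟩ := hu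
  set K := (max 1 k) ^ 3 with hK
  have hK1 : max 1 (k + 1 - 1) = max 1 k := by simp
  have hKk : 1 ≤ K ∧ k ≤ K ∧ k ^ 2 ≤ K ∧ k ^ 3 ≤ K := by
    have m1 : 1 ≤ max 1 k := le_max_left _ _
    have m2 : k ≤ max 1 k := le_max_right _ _
    refine ⟨Nat.one_le_pow _ _ m1, m2.trans (Nat.le_self_pow (by norm_num) _), ?_, ?_⟩
    · exact (Nat.pow_le_pow_left m2 2).trans (Nat.pow_le_pow_right m1 (by norm_num))
    · exact Nat.pow_le_pow_left m2 3
  obtain ⟨k0, k1, k2, k3⟩ := hKk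
  have hc2 : 16 + Z.card ≤ 2 * c := by omega
  have hd : k * Z.card ≤ K * Z.card := Nat.mul_le_mul_right _ k1
  have hd0 : Z.card ≤ K * Z.card := Nat.le_mul_of_pos_left _ k0
  have hcK : 16 * K + K * Z.card ≤ 2 * (c * K) := by nlinarith
  obtain ⟨N, hN⟩ : ∃ N, N + (Z.card + 4 * k ^ 2 + k) = 8 * c * K := by
    refine ⟨8 * c * K - (Z.card + 4 * k ^ 2 + k), Nat.sub_add_cancel ?_⟩
    nlinarith
  obtain ⟨B, hAB, hBc, hBb, hBf, hBu⟩ := extend_pair f Z A hZ u N (by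
    rw [h1]
    have : 2 * (2 * k + 1) * (Z.card + 2 * k * (2 * k)) + (2 * k + 1) ^ 2 =
      4 * (k * Z.card) + 2 * Z.card + 16 * k ^ 3 + 12 * k ^ 2 + 4 * k + 1 := by ring
    rw [this]
    have : 8 * c * K = 8 * (c * K) := by ring
    omega) h3 hu2
  refine ⟨B, ⟨by omega, ?_, hBf⟩, hAB, ?_⟩
  · intro b hb
    rw [hK1, ← hK]
    rcases hBb b hb with h | h
    · refine (h2 b h).trans ?_
      have : max 1 (k - 1) ≤ max 1 k := by omega
      have : 8 * c * (max 1 (k - 1)) ^ 3 ≤ 8 * c * K :=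
        Nat.mul_le_mul_left _ (Nat.pow_le_pow_left this 3)
      exact_mod_cast this
    · rw [← hN]
      push_cast at *
      linarith
  · intro h
    rw [← hu3 h]
    exact hBu

def target (k : ℕ) : ℤ := ((Nat.unpair (Nat.unpair k).2).1 : ℤ) - (Nat.unpair (Nat.unpair k).2).2

theorem target_abs (k : ℕ) : |target k| ≤ k := by
  have h1 := Nat.unpair_left_le (Nat.unpair k).2
  have h2 := Nat.unpair_right_le (Nat.unpair k).2
  have h3 := Nat.unpair_right_le k
  unfold target
  rw [abs_le]
  omega

theorem target_inf (n : ℤ) (N : ℕ) : ∃ k, N ≤ k ∧ target k = n := by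
  refine ⟨Nat.pair N (Nat.pair n.toNat (-n).toNat), Nat.left_le_pair _ _, ?_⟩
  simp only [target, Nat.unpair_pair]
  omega

theorem rep2_union_le (S : ℕ → Finset ℤ) (hS : Monotone S) (n : ℤ) (b : ℕ∞)
    (h : ∀ k, rep2 (S k) n ≤ b) : rep2 (⋃ k, (S k : Set ℤ)) n ≤ b := by
  by_contra! hlt
  unfold rep2 at hlt
  obtain ⟨T, hT, hTc⟩ := Set.exists_subset_encard_eq (Order.add_one_le_of_lt hlt)
  have hb : b ≠ ⊤ := ne_top_of_lt hlt
  have hfin : T.Finite := by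
    rw [← Set.encard_lt_top_iff, hTc]
    exact ENat.add_lt_top.2 ⟨lt_top_iff_ne_top.2 hb, by simp⟩
  have hk : ∃ k, ∀ p ∈ T, p.1 ∈ S k ∧ p.2 ∈ S k := by
    have : ∀ p : ℤ × ℤ, ∃ k, p ∈ T → p.1 ∈ S k ∧ p.2 ∈ S k := by
      intro p
      by_cases hp : p ∈ T
      · obtain ⟨h1, h2, -, -⟩ := hT hp
        obtain ⟨i, hi⟩ := Set.mem_iUnion.1 h1
        obtain ⟨j, hj⟩ := Set.mem_iUnion.1 h2
        exact ⟨max i j, fun _ => ⟨hS (le_max_left _ _) (by simpa using hi),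
          hS (le_max_right _ _) (by simpa using hj)⟩⟩
      · exact ⟨0, fun h => absurd h hp⟩
    choose g hg using this
    refine ⟨hfin.toFinset.sup g, fun p hp => ?_⟩
    have hle : g p ≤ hfin.toFinset.sup g := Finset.le_sup (by simpa using hp)
    exact ⟨hS hle (hg p hp).1, hS hle (hg p hp).2⟩
  obtain ⟨k, hk⟩ := hk
  have hsub : T.encard ≤ rep2 (S k) n := by
    apply Set.encard_le_encard
    intro p hp
    obtain ⟨-, -, h3, h4⟩ := hT hp
    exact ⟨by simpa using (hk p hp).1, by simpa using (hk p hp).2, h3, h4⟩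
  have := hsub.trans (h k)
  rw [hTc] at this
  exact absurd ((ENat.add_one_le_iff hb).1 this) (lt_irrefl _)

theorem stmt2 (f : ℤ → ℕ∞) (hf : (f ⁻¹' {0}).Finite) (Δ : ℕ)
    (hΔ : (f ⁻¹' {0}).ncard = Δ) (c : ℕ) (hc : c = 8 + (Δ + 1) / 2) :
    ∃ A : Set ℤ,
      (∀ n : ℤ, rep2 A n = f n) ∧
      ∀ x : ℝ, 8 * (c : ℝ) ≤ x →
        (x / (c : ℝ)) ^ ((1 : ℝ) / 3) ≤ ({a : ℤ | a ∈ A ∧ |(a : ℝ)| ≤ x}.ncard : ℝ) := by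
  classical
  have hZ : ∀ n, f n = 0 → n ∈ hf.toFinset := by intro n hn; simp [hn]
  have hcard : hf.toFinset.card = Δ := by rw [← hΔ, Set.ncard_eq_toFinset_card _ hf]
  have step := fun k A hA =>
    good_step f hf.toFinset hZ c k (by rw [hcard]; exact hc) A hA (target k) (target_abs k)
  have h0 : GoodSet f c 0 ∅ := by
    refine ⟨by simp, by simp, fun n => ?_⟩
    rw [rep2_zero _ _ (by simp)]
    exact zero_le
  choose nxt hn1 hn2 hn3 using step
  let seq : (k : ℕ) → {A : Finset ℤ // GoodSet f c k A} := fun k =>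
    Nat.rec ⟨∅, h0⟩ (fun k A => ⟨nxt k A.1 A.2, hn1 k A.1 A.2⟩) k
  let S : ℕ → Finset ℤ := fun k => (seq k).1
  have hSg : ∀ k, GoodSet f c k (S k) := fun k => (seq k).2
  have hSm : Monotone S := monotone_nat_of_le_succ (fun k => hn2 k (seq k).1 (seq k).2)
  have hSt : ∀ k, rep2 (S k) (target k) < f (target k) →
      rep2 (S k) (target k) + 1 ≤ rep2 (S (k + 1)) (target k) :=
    fun k => hn3 k (seq k).1 (seq k).2
  refine ⟨⋃ k, (S k : Set ℤ), fun n => le_antisymm ?_ ?_, ?_⟩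
  · exact rep2_union_le S hSm n _ (fun k => (hSg k).2.2 n)
  · have key : ∀ m : ℕ, (m : ℕ∞) ≤ f n → ∃ k, (m : ℕ∞) ≤ rep2 (S k) n := by
      intro m
      induction m with
      | zero => intro _; exact ⟨0, by simp⟩
      | succ m ih =>
        intro hm
        obtain ⟨k, hk⟩ := ih (le_trans (by exact_mod_cast Nat.le_succ m) hm)
        obtain ⟨k', hkk, hk'⟩ := target_inf n k
        have h1 : (m : ℕ∞) ≤ rep2 (S k') n :=
          hk.trans (rep2_mono (by exact_mod_cast hSm hkk) n)
        by_cases hlt : rep2 (S k') n < f n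
        · have := hSt k'
          rw [hk'] at this
          refine ⟨k' + 1, le_trans ?_ (this hlt)⟩
          push_cast
          gcongr
        · exact ⟨k', hm.trans (not_lt.1 hlt)⟩
    refine ENat.forall_natCast_le_iff_le.1 fun m hm => ?_
    obtain ⟨k, hk⟩ := key m hm
    exact hk.trans (rep2_mono (Set.subset_iUnion (fun k => (S k : Set ℤ)) k) n)
  · intro x hx
    have hc0 : (0 : ℝ) < c := by
      have : 0 < c := by omega
      exact_mod_cast this
    have hxc : 8 ≤ x / c := by rw [le_div_iff₀ hc0]; exact hx
    set y := (x / (c : ℝ)) ^ ((1 : ℝ) / 3) with hy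
    have hy3 : y ^ 3 = x / c := by
      rw [hy, ← Real.rpow_natCast, ← Real.rpow_mul (by linarith)]
      norm_num
    have hy0 : 0 ≤ y := Real.rpow_nonneg (by linarith) _
    have hy2 : 2 ≤ y := by
      by_contra! h
      have : y ^ 3 < 2 ^ 3 := pow_lt_pow_left₀ h hy0 (by norm_num)
      rw [hy3] at this
      linarith
    set j := ⌊y / 2⌋₊ with hj
    have hj1 : 1 ≤ j := Nat.le_floor (by push_cast; linarith)
    have hj2 : (j : ℝ) ≤ y / 2 := Nat.floor_le (by linarith)
    have hj3 : y / 2 < j + 1 := Nat.lt_floor_add_one _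
    have hxy : x = c * y ^ 3 := by rw [hy3]; field_simp
    have hsub : ((S (j + 1) : Finset ℤ) : Set ℤ) ⊆
        {a : ℤ | a ∈ (⋃ k, (S k : Set ℤ)) ∧ |(a : ℝ)| ≤ x} := by
      intro a ha
      refine ⟨Set.mem_iUnion.2 ⟨_, ha⟩, ?_⟩
      have hb := (hSg (j + 1)).2.1 a (by simpa using ha)
      rw [Nat.add_sub_cancel, max_eq_right hj1] at hb
      have hb' : |(a : ℝ)| ≤ 8 * c * (j : ℝ) ^ 3 := by exact_mod_cast hb
      have : (j : ℝ) ^ 3 ≤ (y / 2) ^ 3 := pow_le_pow_left₀ (by positivity) hj2 3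
      have h8 : 8 * c * (j : ℝ) ^ 3 ≤ 8 * c * (y / 2) ^ 3 := by gcongr
      calc |(a : ℝ)| ≤ 8 * c * (y / 2) ^ 3 := hb'.trans h8
        _ = x := by rw [hxy]; ring
    have hfin : {a : ℤ | a ∈ (⋃ k, (S k : Set ℤ)) ∧ |(a : ℝ)| ≤ x}.Finite := by
      apply (Set.finite_Icc (-⌈x⌉) ⌈x⌉).subset
      rintro a ⟨-, ha⟩
      have h1 := abs_le.1 ha
      have h2 := Int.le_ceil x
      constructor
      · have : (-⌈x⌉ : ℝ) ≤ a := by linarith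
        exact_mod_cast this
      · have : (a : ℝ) ≤ ⌈x⌉ := by linarith
        exact_mod_cast this
    have hle := Set.ncard_le_ncard hsub hfin
    rw [Set.ncard_coe_finset, (hSg (j + 1)).1] at hle
    have hle' : ((2 * (j + 1) : ℕ) : ℝ) ≤
        ({a : ℤ | a ∈ (⋃ k, (S k : Set ℤ)) ∧ |(a : ℝ)| ≤ x}.ncard : ℝ) := by exact_mod_cast hle
    refine le_trans ?_ hle'
    push_cast
    linarith
end

section
/- Let f : ℤ → ℕ ∪ {∞} be any function such that Δ = card(f⁻¹(0)) is finite, and let c = 8 + ⌊(Δ + 1)/2⌋. Then the collection of sets A of integers satisfying both r_{A,2}(n) = f(n) for all integers n and the lower bound that the number of elements a ∈ A with |a| ≤ x is at least (x/c)^{1/3} for all real x ≥ 8c, is uncountable. -/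
/-- the finite set of pairs counted by `rep2` -/
def repSet (A : Set ℤ) (n : ℤ) : Set (ℤ × ℤ) :=
  {p : ℤ × ℤ | p.1 ∈ A ∧ p.2 ∈ A ∧ p.1 ≤ p.2 ∧ p.1 + p.2 = n}

theorem card_img2 (g : ℤ → ℤ → ℤ) (S T : Finset ℤ) :
    (Finset.image₂ g S T).card ≤ S.card * T.card := Finset.card_image₂_le g S T

/-- Choice of a new pair avoiding all coincidences. -/
theorem exists_x (A F Z : Finset ℤ) (u : ℤ) (M : ℕ)
    (hM : 2 * (A.card * A.card + Z.card + 1) * A.card + 2 * (A.card * A.card + Z.card + 1)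
      + A.card * A.card + 4 * A.card + 1 + 2 * F.card < 2 * M + 1) :
    ∃ x y : ℤ, x + y = u ∧ |x| ≤ M ∧ x ∉ A ∧ y ∉ A ∧ x ∉ F ∧ y ∉ F ∧ x ≠ y ∧
      (∃ T : Finset ℤ, u ∈ T ∧ Z ⊆ T ∧ (∀ a ∈ A, ∀ b ∈ A, a + b ∈ T) ∧
        (∀ a ∈ A, a + x ∉ T ∧ a + y ∉ T) ∧ x + x ∉ T ∧ y + y ∉ T) ∧
      (∀ a ∈ A, ∀ b ∈ A, a + x ≠ b + y) ∧ (∀ a ∈ A, a + x ≠ y + y) ∧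
      (∀ a ∈ A, a + y ≠ x + x) := by
  classical
  set T : Finset ℤ := insert u (Finset.image₂ (fun a b => a + b) A A ∪ Z) with hT
  have hTc : T.card ≤ A.card * A.card + Z.card + 1 := by
    refine (Finset.card_insert_le _ _).trans ?_
    have := Finset.card_union_le (Finset.image₂ (fun a b => a + b) A A) Z
    have := card_img2 (fun a b => a + b) A A
    omega
  set B1 := Finset.image₂ (fun t a => t - a) T A with hB1
  set B2 := Finset.image₂ (fun t a => u - (t - a)) T A with hB2
  set B3 := T.image (fun t => t / 2) with hB3
  set B4 := T.image (fun t => u - t / 2) with hB4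
  set B5 := Finset.image₂ (fun a b => (u + b - a) / 2) A A with hB5
  set B6 := A.image (fun a => u - a) with hB6
  set B7 := A.image (fun a => (2 * u - a) / 3) with hB7
  set B8 := A.image (fun a => (u + a) / 3) with hB8
  set B9 := F.image (fun a => u - a) with hB9
  have c1 : B1.card ≤ T.card * A.card := card_img2 _ _ _
  have c2 : B2.card ≤ T.card * A.card := card_img2 _ _ _
  have c3 : B3.card ≤ T.card := Finset.card_image_le
  have c4 : B4.card ≤ T.card := Finset.card_image_le
  have c5 : B5.card ≤ A.card * A.card := card_img2 _ _ _
  have c6 : B6.card ≤ A.card := Finset.card_image_le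
  have c7 : B7.card ≤ A.card := Finset.card_image_le
  have c8 : B8.card ≤ A.card := Finset.card_image_le
  have c9 : B9.card ≤ F.card := Finset.card_image_le
  have hTA : T.card * A.card ≤ (A.card * A.card + Z.card + 1) * A.card :=
    Nat.mul_le_mul_right _ hTc
  set Bad : Finset ℤ :=
    insert (u / 2) (B1 ∪ B2 ∪ B3 ∪ B4 ∪ B5 ∪ B6 ∪ B7 ∪ B8 ∪ B9 ∪ A ∪ F) with hBad
  have hcard : Bad.card < (Finset.Icc (-(M : ℤ)) M).card := by
    have e0 := Finset.card_insert_le (u / 2) (B1 ∪ B2 ∪ B3 ∪ B4 ∪ B5 ∪ B6 ∪ B7 ∪ B8 ∪ B9 ∪ A ∪ F)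
    have e1 := Finset.card_union_le (B1 ∪ B2 ∪ B3 ∪ B4 ∪ B5 ∪ B6 ∪ B7 ∪ B8 ∪ B9 ∪ A) F
    have e2 := Finset.card_union_le (B1 ∪ B2 ∪ B3 ∪ B4 ∪ B5 ∪ B6 ∪ B7 ∪ B8 ∪ B9) A
    have e3 := Finset.card_union_le (B1 ∪ B2 ∪ B3 ∪ B4 ∪ B5 ∪ B6 ∪ B7 ∪ B8) B9
    have e4 := Finset.card_union_le (B1 ∪ B2 ∪ B3 ∪ B4 ∪ B5 ∪ B6 ∪ B7) B8
    have e5 := Finset.card_union_le (B1 ∪ B2 ∪ B3 ∪ B4 ∪ B5 ∪ B6) B7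
    have e6 := Finset.card_union_le (B1 ∪ B2 ∪ B3 ∪ B4 ∪ B5) B6
    have e7 := Finset.card_union_le (B1 ∪ B2 ∪ B3 ∪ B4) B5
    have e8 := Finset.card_union_le (B1 ∪ B2 ∪ B3) B4
    have e9 := Finset.card_union_le (B1 ∪ B2) B3
    have e10 := Finset.card_union_le B1 B2
    rw [Int.card_Icc]
    have : ((M : ℤ) + 1 - -(M : ℤ)).toNat = 2 * M + 1 := by omega
    rw [this]
    linarith
  obtain ⟨x, hx, hxB⟩ := Finset.exists_mem_notMem_of_card_lt_card hcard
  simp only [hBad, Finset.mem_insert, Finset.mem_union, not_or] at hxB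
  obtain ⟨n0, ⟨⟨⟨⟨⟨⟨⟨⟨⟨n1, n2⟩, n3⟩, n4⟩, n5⟩, n6⟩, n7⟩, n8⟩, n9⟩, nA⟩, nF⟩ := hxB
  have m2 : ∀ (g : ℤ → ℤ → ℤ) (S T : Finset ℤ), x ∉ Finset.image₂ g S T →
      ∀ a ∈ S, ∀ b ∈ T, g a b ≠ x := by
    intro g S T h a ha b hb e
    exact h (Finset.mem_image₂.2 ⟨a, ha, b, hb, e⟩)
  have m1 : ∀ (g : ℤ → ℤ) (S : Finset ℤ), x ∉ S.image g → ∀ a ∈ S, g a ≠ x := by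
    intro g S h a ha e
    exact h (Finset.mem_image.2 ⟨a, ha, e⟩)
  have n1 := m2 _ _ _ n1
  have n2 := m2 _ _ _ n2
  have n3 := m1 _ _ n3
  have n4 := m1 _ _ n4
  have n5 := m2 _ _ _ n5
  have n6 := m1 _ _ n6
  have n7 := m1 _ _ n7
  have n8 := m1 _ _ n8
  have n9 := m1 _ _ n9
  clear_value B1 B2 B3 B4 B5 B6 B7 B8 B9 Bad
  rw [Finset.mem_Icc] at hx
  refine ⟨x, u - x, by ring, abs_le.2 hx, nA, ?_, nF, ?_, ?_, ⟨T, ?_, ?_, ?_, ?_, ?_, ?_⟩, ?_, ?_, ?_⟩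
  · intro h; exact n6 _ h (by ring)
  · intro h; exact n9 _ h (by ring)
  · intro h; omega
  · simp [hT]
  · intro z hz; simp [hT, hz]
  · intro a ha b hb
    rw [hT]
    exact Finset.mem_insert_of_mem (Finset.mem_union_left _
      (Finset.mem_image₂.2 ⟨a, ha, b, hb, rfl⟩))
  · intro a ha
    exact ⟨fun h => n1 _ h a ha (by ring), fun h => n2 _ h a ha (by ring)⟩
  · intro h; have := n3 _ h; omega
  · intro h; have := n4 _ h; omega
  · intro a ha b hb h; have := n5 a ha b hb; omega
  · intro a ha h; have := n7 a ha; omega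
  · intro a ha h; have := n8 a ha; omega

set_option maxHeartbeats 4000000 in
/-- Adding the pair preserves `rep2 ≤ f` and increases `rep2` at `u`. -/
theorem add_pair (f : ℤ → ℕ∞) (A Z : Finset ℤ) (hZ : ∀ n, f n = 0 → n ∈ Z)
    (hA : ∀ n, rep2 (A : Set ℤ) n ≤ f n) (u : ℤ) (hu : rep2 (A : Set ℤ) u < f u)
    (x y : ℤ) (hxy : x + y = u) (hxA : x ∉ A) (hne : x ≠ y)
    (hT : ∃ T : Finset ℤ, u ∈ T ∧ Z ⊆ T ∧ (∀ a ∈ A, ∀ b ∈ A, a + b ∈ T) ∧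
        (∀ a ∈ A, a + x ∉ T ∧ a + y ∉ T) ∧ x + x ∉ T ∧ y + y ∉ T)
    (hyA : y ∉ A)
    (h1 : ∀ a ∈ A, ∀ b ∈ A, a + x ≠ b + y) (h2 : ∀ a ∈ A, a + x ≠ y + y)
    (h3 : ∀ a ∈ A, a + y ≠ x + x) :
    (∀ n, rep2 (insert x (insert y A) : Finset ℤ) n ≤ f n) ∧
    rep2 (A : Set ℤ) u + 1 ≤ rep2 (insert x (insert y A) : Finset ℤ) u := by
  classical
  obtain ⟨T, huT, hZT, hAT, hax, hxx, hyy⟩ := hT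
  constructor
  · intro n
    by_cases hn : n ∈ T
    · by_cases hnu : n = u
      · subst hnu
        have hs : repSet (insert x (insert y A) : Finset ℤ) n ⊆
            insert (min x y, max x y) (repSet (A : Set ℤ) n) := by
          rintro ⟨p, q⟩ ⟨hp, hq, hle, hsum⟩
          simp only [Finset.coe_insert, Set.mem_insert_iff, Finset.mem_coe] at hp hq hle hsum
          simp only [Set.mem_insert_iff, Prod.mk.injEq]
          rcases hp with rfl | rfl | hp <;> rcases hq with rfl | rfl | hq
          · rw [← hsum] at hn; exact absurd hn hxx
          · left; exact ⟨(min_eq_left hle).symm, (max_eq_right hle).symm⟩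
          · rw [← hsum, add_comm] at hn; exact absurd hn (hax _ hq).1
          · left; exact ⟨(min_eq_right hle).symm, (max_eq_left hle).symm⟩
          · rw [← hsum] at hn; exact absurd hn hyy
          · rw [← hsum, add_comm] at hn; exact absurd hn (hax _ hq).2
          · rw [← hsum] at hn; exact absurd hn (hax _ hp).1
          · rw [← hsum] at hn; exact absurd hn (hax _ hp).2
          · right; exact ⟨hp, hq, hle, hsum⟩
        calc rep2 (insert x (insert y A) : Finset ℤ) n
            ≤ (insert (min x y, max x y) (repSet (A : Set ℤ) n)).encard :=
              Set.encard_le_encard hs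
          _ ≤ (repSet (A : Set ℤ) n).encard + 1 := Set.encard_insert_le _ _
          _ ≤ f n := Order.add_one_le_of_lt hu
      · refine le_trans (Set.encard_le_encard ?_) (hA n)
        rintro ⟨p, q⟩ ⟨hp, hq, hle, hsum⟩
        simp only [Finset.coe_insert, Set.mem_insert_iff, Finset.mem_coe] at hp hq hle hsum
        rcases hp with rfl | rfl | hp <;> rcases hq with rfl | rfl | hq
        · rw [← hsum] at hn; exact absurd hn hxx
        · omega
        · rw [← hsum, add_comm] at hn; exact absurd hn (hax _ hq).1
        · omega
        · rw [← hsum] at hn; exact absurd hn hyy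
        · rw [← hsum, add_comm] at hn; exact absurd hn (hax _ hq).2
        · rw [← hsum] at hn; exact absurd hn (hax _ hp).1
        · rw [← hsum] at hn; exact absurd hn (hax _ hp).2
        · exact ⟨hp, hq, hle, hsum⟩
    · have hf1 : 1 ≤ f n := by
        rw [Order.one_le_iff_ne_zero]
        intro h; exact hn (hZT (hZ n h))
      refine le_trans ?_ hf1
      unfold rep2
      rw [Set.encard_le_one_iff]
      rintro ⟨p, q⟩ ⟨p', q'⟩ ⟨hp, hq, hle, hsum⟩ ⟨hp', hq', hle', hsum'⟩
      simp only [Finset.coe_insert, Set.mem_insert_iff, Finset.mem_coe] at hp hq hle hsum hp' hq' hle' hsum'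
      -- each pair has one of four shapes
      have key : ∀ p q : ℤ, (p = x ∨ p = y ∨ p ∈ A) → (q = x ∨ q = y ∨ q ∈ A) → p + q = n →
          (p = x ∧ q = x) ∨ (p = y ∧ q = y) ∨ (p = x ∧ q ∈ A) ∨ (p ∈ A ∧ q = x) ∨
          (p = y ∧ q ∈ A) ∨ (p ∈ A ∧ q = y) := by
        intro p q hp2 hq2 hs
        rcases hp2 with rfl | rfl | hp2 <;> rcases hq2 with rfl | rfl | hq2
        · exact Or.inl ⟨rfl, rfl⟩
        · exact absurd huT (by rw [← hxy, hs]; exact hn)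
        · exact Or.inr (Or.inr (Or.inl ⟨rfl, hq2⟩))
        · exact absurd huT (by rw [← hxy, add_comm, hs]; exact hn)
        · exact Or.inr (Or.inl ⟨rfl, rfl⟩)
        · exact Or.inr (Or.inr (Or.inr (Or.inr (Or.inl ⟨rfl, hq2⟩))))
        · exact Or.inr (Or.inr (Or.inr (Or.inl ⟨hp2, rfl⟩)))
        · exact Or.inr (Or.inr (Or.inr (Or.inr (Or.inr ⟨hp2, rfl⟩))))
        · exact absurd (hAT _ hp2 _ hq2) (by rw [hs]; exact hn)
      have e1 : ∀ a ∈ A, ∀ b ∈ A, ¬ (a + x = b + y) := h1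
      have e2 : ∀ a ∈ A, a ≠ x := fun a ha h => hxA (h ▸ ha)
      have e3 : ∀ a ∈ A, a ≠ y := fun a ha h => hyA (h ▸ ha)
      rw [Prod.mk.injEq]
      rcases key p q hp hq hsum with ⟨rfl, rfl⟩ | ⟨rfl, rfl⟩ | ⟨rfl, ha⟩ | ⟨ha, rfl⟩ | ⟨rfl, ha⟩ | ⟨ha, rfl⟩ <;>
      rcases key p' q' hp' hq' hsum' with ⟨r1, r2⟩ | ⟨r1, r2⟩ | ⟨r1, hb⟩ | ⟨hb, r1⟩ | ⟨r1, hb⟩ | ⟨hb, r1⟩ <;>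
      grind
  · have hnot : (min x y, max x y) ∉ repSet (A : Set ℤ) u := by
      rintro ⟨ha, hb, -, -⟩
      rcases min_choice x y with h | h
      · rw [h] at ha; exact hxA ha
      · rw [h] at ha; exact hyA ha
    have : rep2 (A : Set ℤ) u + 1 = (insert (min x y, max x y) (repSet (A : Set ℤ) u)).encard :=
      (Set.encard_insert_of_notMem hnot).symm
    rw [this]
    apply Set.encard_le_encard
    rintro p (rfl | ⟨ha, hb, hle, hs⟩)
    · refine ⟨?_, ?_, min_le_max, ?_⟩
      · rcases min_choice x y with h | h <;> simp [h]
      · rcases max_choice x y with h | h <;> simp [h]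
      · simp only [min_add_max, hxy]
    · simp only [Finset.mem_coe] at ha hb
      exact ⟨by simp [ha], by simp [hb], hle, hs⟩

/-- the radius -/
def Rad (c k : ℕ) : ℕ := 8 * c * (max (k - 1) 1) ^ 3

theorem Rad_mono (c k : ℕ) : Rad c k ≤ Rad c (k + 1) := by
  unfold Rad
  gcongr
  omega

theorem exists_u (f : ℤ → ℕ∞) (A Z : Finset ℤ) (hZ : ∀ n, f n = 0 → n ∈ Z) (k : ℕ)
    (hk : A.card = 2 * k) (v : ℤ) (hv : |v| ≤ k) :
    ∃ u, |u| ≤ ((2 * k ^ 2 + (Z.card + 1) / 2 : ℕ) : ℤ) ∧ rep2 (A : Set ℤ) u < f u ∧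
      (rep2 (A : Set ℤ) v < f v → u = v) := by
  classical
  by_cases h : rep2 (A : Set ℤ) v < f v
  · refine ⟨v, hv.trans ?_, h, fun _ => rfl⟩
    norm_cast
    nlinarith [Nat.zero_le ((Z.card + 1) / 2), Nat.le_self_pow (two_ne_zero) k]
  · set L := 2 * k ^ 2 + (Z.card + 1) / 2 with hL
    have hc : (Finset.image₂ (fun a b => a + b) A A ∪ Z).card <
        (Finset.Icc (-(L : ℤ)) L).card := by
      have e1 := Finset.card_union_le (Finset.image₂ (fun a b => a + b) A A) Z
      have e2 := card_img2 (fun a b => a + b) A A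
      have e3 : A.card * A.card = 4 * k ^ 2 := by rw [hk]; ring
      rw [Int.card_Icc]
      omega
    obtain ⟨u, hu, hn⟩ := Finset.exists_mem_notMem_of_card_lt_card hc
    rw [Finset.mem_union, not_or] at hn
    refine ⟨u, abs_le.2 (Finset.mem_Icc.1 hu), ?_, fun h' => absurd h' h⟩
    have : rep2 (A : Set ℤ) u = 0 := by
      unfold rep2
      rw [Set.encard_eq_zero, Set.eq_empty_iff_forall_notMem]
      rintro ⟨p, q⟩ ⟨hp, hq, -, hs⟩
      exact hn.1 (Finset.mem_image₂.2 ⟨p, hp, q, hq, hs⟩)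
    rw [this, pos_iff_ne_zero]
    exact fun h0 => hn.2 (hZ u h0)

theorem arith_bound (k D F : ℕ) (hF : F ≤ k + 1) :
    2 * (2 * k * (2 * k) + D + 1) * (2 * k) + 2 * (2 * k * (2 * k) + D + 1)
      + 2 * k * (2 * k) + 4 * (2 * k) + 1 + 2 * F
      + 2 * (2 * k ^ 2 + (D + 1) / 2) < 2 * Rad (8 + (D + 1) / 2) (k + 1) + 1 := by
  unfold Rad
  have hE : D ≤ 2 * ((D + 1) / 2) := by omega
  generalize (D + 1) / 2 = E at *
  rcases k with _ | k
  · norm_num; omega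
  · have : max (k + 1 + 1 - 1) 1 = k + 1 := by omega
    rw [this]
    have h1 : D * (k + 1) ≤ 2 * E * (k + 1) := Nat.mul_le_mul_right _ hE
    nlinarith [Nat.zero_le (E * k), Nat.zero_le (E * k ^ 2), Nat.zero_le (E * k ^ 3),
      Nat.zero_le (k ^ 2), Nat.zero_le (k ^ 3)]

def StInv (f : ℤ → ℕ∞) (c k : ℕ) (s : Finset ℤ × Finset ℤ) : Prop :=
  s.1.card = 2 * k ∧ s.2.card ≤ k ∧ Disjoint s.1 s.2 ∧ (∀ a ∈ s.1, |a| ≤ (Rad c k : ℤ)) ∧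
    ∀ n, rep2 (s.1 : Set ℤ) n ≤ f n

theorem pre_step (f : ℤ → ℕ∞) (Z : Finset ℤ) (hZ : ∀ n, f n = 0 → n ∈ Z) (c k : ℕ)
    (hc : c = 8 + (Z.card + 1) / 2) (v : ℤ) (hv : |v| ≤ k)
    (A : Finset ℤ) (hAc : A.card = 2 * k) (hAR : ∀ a ∈ A, |a| ≤ (Rad c k : ℤ))
    (hAf : ∀ n, rep2 (A : Set ℤ) n ≤ f n) (F : Finset ℤ) (hF : F.card ≤ k + 1)
    (hd : Disjoint A F) :
    ∃ x, ∃ A' : Finset ℤ, x ∈ A' ∧ x ∉ A ∧ x ∉ F ∧ A'.card = 2 * (k + 1) ∧ Disjoint A' F ∧ A ⊆ A' ∧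
      (∀ a ∈ A', |a| ≤ (Rad c (k + 1) : ℤ)) ∧ (∀ n, rep2 (A' : Set ℤ) n ≤ f n) ∧
      (rep2 (A : Set ℤ) v < f v → rep2 (A : Set ℤ) v + 1 ≤ rep2 (A' : Set ℤ) v) := by
  classical
  obtain ⟨u, huL, hu, huv⟩ := exists_u f A Z hZ k hAc v hv
  set L := 2 * k ^ 2 + (Z.card + 1) / 2 with hL
  have hb := arith_bound k Z.card F.card hF
  rw [← hc, ← hL] at hb
  have hLR : L ≤ Rad c (k + 1) := by omega
  obtain ⟨x, y, hxy, hxM, hxA, hyA, hxF, hyF, hne, hT, h1, h2, h3⟩ :=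
    exists_x A F Z u (Rad c (k + 1) - L) (by rw [hAc]; omega)
  obtain ⟨g1, g2⟩ := add_pair f A Z hZ hAf u hu x y hxy hxA hne hT hyA h1 h2 h3
  refine ⟨x, insert x (insert y A), by simp, hxA, hxF, ?_, ?_, ?_, ?_, g1, ?_⟩
  · rw [Finset.card_insert_of_notMem, Finset.card_insert_of_notMem hyA, hAc]
    · ring
    · simp [hne, hxA]
  · simp [hxF, hyF, hd]
  · intro a ha; simp [ha]
  · intro a ha
    rw [Nat.cast_sub hLR] at hxM
    rw [abs_le] at hxM huL
    simp only [Finset.mem_insert] at ha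
    rcases ha with rfl | rfl | ha
    · rw [abs_le]; constructor <;> omega
    · rw [abs_le]; constructor <;> omega
    · exact (hAR a ha).trans (by exact_mod_cast Rad_mono c k)
  · intro h
    have := huv h
    subst this
    exact g2

theorem step (f : ℤ → ℕ∞) (Z : Finset ℤ) (hZ : ∀ n, f n = 0 → n ∈ Z) (c k : ℕ)
    (hc : c = 8 + (Z.card + 1) / 2) (v : ℤ) (hv : |v| ≤ k) (B : Set ℤ)
    (s : Finset ℤ × Finset ℤ) (hs : StInv f c k s) :
    ∃ s' : Finset ℤ × Finset ℤ, StInv f c (k + 1) s' ∧ s.1 ⊆ s'.1 ∧ s.2 ⊆ s'.2 ∧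
      (rep2 (s.1 : Set ℤ) v < f v → rep2 (s.1 : Set ℤ) v + 1 ≤ rep2 (s'.1 : Set ℤ) v) ∧
      ((∃ x ∈ s'.1, x ∉ B) ∨ (∃ x ∈ s'.2, x ∈ B)) := by
  classical
  obtain ⟨A, F⟩ := s
  obtain ⟨hAc, hFc, hd, hAR, hAf⟩ := hs
  dsimp only at *
  obtain ⟨x, A', hx, hxA, hxF, i1, i2, i3, i4, i5, i6⟩ :=
    pre_step f Z hZ c k hc v hv A hAc hAR hAf F (by omega) hd
  by_cases hxB : x ∈ B
  · have hFx : (insert x F).card ≤ k + 1 := (Finset.card_insert_le _ _).trans (by omega)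
    obtain ⟨x', A'', -, -, -, j1, j2, j3, j4, j5, j6⟩ :=
      pre_step f Z hZ c k hc v hv A hAc hAR hAf (insert x F) hFx (by simp [hxA, hd])
    exact ⟨(A'', insert x F), ⟨j1, hFx, j2, j4, j5⟩, j3, Finset.subset_insert _ _, j6,
      Or.inr ⟨x, Finset.mem_insert_self _ _, hxB⟩⟩
  · exact ⟨(A', F), ⟨i1, by dsimp only; omega, i2, i4, i5⟩, i3, Finset.Subset.refl _, i6,
      Or.inl ⟨x, hx, hxB⟩⟩

/-- enumeration hitting every integer infinitely often -/
def vseq (k : ℕ) : ℤ :=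
  ((Nat.unpair (Nat.unpair k).1).1 : ℤ) - ((Nat.unpair (Nat.unpair k).1).2 : ℤ)

theorem vseq_le (k : ℕ) : |vseq k| ≤ k := by
  unfold vseq
  have h1 := Nat.unpair_left_le k
  have h2 := Nat.unpair_left_le (Nat.unpair k).1
  have h3 := Nat.unpair_right_le (Nat.unpair k).1
  rw [abs_le]; constructor <;> omega

theorem vseq_inf (n : ℤ) (j : ℕ) : ∃ k, j ≤ k ∧ vseq k = n := by
  refine ⟨Nat.pair (Nat.pair n.toNat (-n).toNat) j, Nat.right_le_pair _ _, ?_⟩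
  unfold vseq
  simp only [Nat.unpair_pair]
  omega

theorem construct (f : ℤ → ℕ∞) (Z : Finset ℤ) (hZ : ∀ n, f n = 0 → n ∈ Z) (c : ℕ)
    (hc : c = 8 + (Z.card + 1) / 2) (B : ℕ → Set ℤ) :
    ∃ A : Set ℤ, (∀ n, rep2 A n = f n) ∧ (∀ k, A ≠ B k) ∧
      ∀ k, ∃ S : Finset ℤ, S.card = 2 * k ∧ (S : Set ℤ) ⊆ A ∧ ∀ a ∈ S, |a| ≤ (Rad c k : ℤ) := by
  classical
  have hstep : ∀ (k : ℕ) (s : Finset ℤ × Finset ℤ), ∃ s' : Finset ℤ × Finset ℤ,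
      StInv f c k s → (StInv f c (k + 1) s' ∧ s.1 ⊆ s'.1 ∧ s.2 ⊆ s'.2 ∧
      (rep2 (s.1 : Set ℤ) (vseq k) < f (vseq k) →
        rep2 (s.1 : Set ℤ) (vseq k) + 1 ≤ rep2 (s'.1 : Set ℤ) (vseq k)) ∧
      ((∃ x ∈ s'.1, x ∉ B k) ∨ (∃ x ∈ s'.2, x ∈ B k))) := by
    intro k s
    by_cases h : StInv f c k s
    · obtain ⟨s', hs'⟩ := step f Z hZ c k hc (vseq k) (vseq_le k) (B k) s h
      exact ⟨s', fun _ => hs'⟩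
    · exact ⟨s, fun h' => absurd h' h⟩
  choose g hg using hstep
  let s : ℕ → Finset ℤ × Finset ℤ := fun n => Nat.rec (∅, ∅) g n
  have hs0 : s 0 = (∅, ∅) := rfl
  have hsS : ∀ k, s (k + 1) = g k (s k) := fun k => rfl
  have hI : ∀ k, StInv f c k (s k) := by
    intro k
    induction k with
    | zero =>
      rw [hs0]
      refine ⟨rfl, le_refl _, by simp, by simp, ?_⟩
      intro n
      simp [rep2]
    | succ k ih => rw [hsS]; exact (hg k _ ih).1
  have hQ := fun k => (hg k _ (hI k)).2
  simp only [← hsS] at hQ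
  have mA : Monotone (fun k => (s k).1) := monotone_nat_of_le_succ (fun k => (hQ k).1)
  have mF : Monotone (fun k => (s k).2) := monotone_nat_of_le_succ (fun k => (hQ k).2.1)
  set A : Set ℤ := ⋃ k, ((s k).1 : Set ℤ) with hA
  have hsub : ∀ k, ((s k).1 : Set ℤ) ⊆ A := fun k => Set.subset_iUnion (fun k => ((s k).1 : Set ℤ)) k
  have hle : ∀ n, rep2 A n ≤ f n := by
    intro n
    by_contra hlt
    rw [not_le] at hlt
    have hfin : f n ≠ ⊤ := ne_top_of_lt hlt
    obtain ⟨t, ht, htc⟩ := Set.exists_subset_encard_eq (Order.add_one_le_of_lt hlt)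
    have htf : t.Finite := by
      rw [← Set.encard_lt_top_iff, htc]
      exact lt_top_iff_ne_top.2 (by simp [hfin])
    have : ∃ k, ∀ p ∈ t, p.1 ∈ (s k).1 ∧ p.2 ∈ (s k).1 := by
      have hp : ∀ p ∈ t, ∃ k, p.1 ∈ (s k).1 ∧ p.2 ∈ (s k).1 := by
        intro p hp
        obtain ⟨h1, h2, -, -⟩ := ht hp
        obtain ⟨i, hi⟩ := Set.mem_iUnion.1 h1
        obtain ⟨j, hj⟩ := Set.mem_iUnion.1 h2
        exact ⟨max i j, mA (le_max_left i j) hi, mA (le_max_right i j) hj⟩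
      choose! K hK using hp
      obtain ⟨M, hM⟩ := (htf.image K).bddAbove
      refine ⟨M, fun p hp => ?_⟩
      have := hM (Set.mem_image_of_mem K hp)
      exact ⟨mA this (hK p hp).1, mA this (hK p hp).2⟩
    obtain ⟨k, hk⟩ := this
    have h1 : t.encard ≤ rep2 ((s k).1 : Set ℤ) n := by
      apply Set.encard_le_encard
      intro p hp
      exact ⟨(hk p hp).1, (hk p hp).2, (ht hp).2.2.1, (ht hp).2.2.2⟩
    rw [htc] at h1
    have h2 := h1.trans ((hI k).2.2.2.2 n)
    exact absurd ((ENat.add_one_le_iff hfin).1 h2) (lt_irrefl _)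
  refine ⟨A, fun n => ?_, ?_, ?_⟩
  · by_contra hne
    have hlt : rep2 A n < f n := lt_of_le_of_ne (hle n) hne
    have hgrow : ∀ j : ℕ, ∃ k, (j : ℕ∞) ≤ rep2 ((s k).1 : Set ℤ) n := by
      intro j
      induction j with
      | zero => exact ⟨0, by simp⟩
      | succ j ih =>
        obtain ⟨k, hk⟩ := ih
        obtain ⟨k', hk', hv⟩ := vseq_inf n k
        refine ⟨k' + 1, ?_⟩
        have h3 := (hQ k').2.2.1
        rw [hv] at h3
        refine le_trans ?_ (h3 (lt_of_le_of_lt (rep2_mono (hsub k') n) hlt))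
        push_cast
        gcongr
        exact hk.trans (rep2_mono (by exact_mod_cast mA hk') n)
    have htop : rep2 A n = ⊤ := by
      rw [ENat.eq_top_iff_forall_ge]
      intro j
      obtain ⟨k, hk⟩ := hgrow j
      exact hk.trans (rep2_mono (hsub k) n)
    rw [htop] at hlt
    exact absurd hlt not_top_lt
  · intro k hk
    rcases (hQ k).2.2.2 with ⟨x, hx, hxB⟩ | ⟨x, hx, hxB⟩
    · exact hxB (hk ▸ hsub (k + 1) hx)
    · rw [← hk] at hxB
      obtain ⟨i, hi⟩ := Set.mem_iUnion.1 hxB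
      have hd := (hI (max i (k + 1))).2.2.1
      exact Finset.disjoint_left.1 hd (mA (le_max_left i (k + 1)) hi) (mF (le_max_right i (k + 1)) hx)
  · intro k
    exact ⟨(s k).1, (hI k).1, hsub k, (hI k).2.2.2.1⟩

theorem stmt3 (f : ℤ → ℕ∞) (hf : (f ⁻¹' {0}).Finite) (Δ : ℕ)
    (hΔ : (f ⁻¹' {0}).ncard = Δ) (c : ℕ) (hc : c = 8 + (Δ + 1) / 2) :
    ¬ Set.Countable {A : Set ℤ |
      (∀ n : ℤ, rep2 A n = f n) ∧
      ∀ x : ℝ, 8 * (c : ℝ) ≤ x →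
        (x / (c : ℝ)) ^ ((1 : ℝ) / 3) ≤ ({a : ℤ | a ∈ A ∧ |(a : ℝ)| ≤ x}.ncard : ℝ)} := by
  intro hcount
  obtain ⟨B, hB⟩ := Set.countable_iff_exists_subset_range.1 hcount
  have hZc : hf.toFinset.card = Δ := by rw [← hΔ, Set.ncard_eq_toFinset_card _ hf]
  obtain ⟨A, h1, h2, h3⟩ := construct f hf.toFinset (by intro n hn; simp [hn]) c
    (by rw [hZc]; exact hc) B
  have hmem : A ∈ Set.range B := by
    apply hB
    refine ⟨h1, fun x hx => ?_⟩
    have hc0 : (0 : ℝ) < c := by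
      have : 0 < c := by omega
      exact_mod_cast this
    set t : ℝ := (x / (c : ℝ)) ^ ((1 : ℝ) / 3) with ht
    have hx0 : 0 ≤ x := by linarith
    have ht0 : 0 ≤ t := by positivity
    have ht3 : t ^ 3 = x / c := by
      rw [ht, ← Real.rpow_natCast, ← Real.rpow_mul (by positivity)]
      norm_num
    have hct : (c : ℝ) * t ^ 3 = x := by rw [ht3]; field_simp
    set k := ⌈t / 2⌉₊ with hk
    have hk1 : t / 2 ≤ k := Nat.le_ceil _
    obtain ⟨S, hSc, hSA, hSR⟩ := h3 k
    have hRad : (Rad c k : ℝ) ≤ x := by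
      unfold Rad
      rcases le_total (k - 1) 1 with h | h
      · rw [max_eq_right h]; push_cast; linarith
      · rw [max_eq_left h]
        push_cast
        have hlt : ((k - 1 : ℕ) : ℝ) ≤ t / 2 := by
          have := Nat.ceil_lt_add_one (a := t / 2) (by positivity)
          rw [Nat.cast_sub (by omega)]
          push_cast
          linarith
        calc 8 * (c : ℝ) * ((k - 1 : ℕ) : ℝ) ^ 3 ≤ 8 * c * (t / 2) ^ 3 := by gcongr
          _ = x := by rw [← hct]; ring
    have hfin : {a : ℤ | a ∈ A ∧ |(a : ℝ)| ≤ x}.Finite := by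
      apply (Set.finite_Icc (-⌈x⌉) ⌈x⌉).subset
      rintro a ⟨-, ha⟩
      have h5 := Int.le_ceil x
      rw [abs_le] at ha
      constructor
      · have : ((-⌈x⌉ : ℤ) : ℝ) ≤ a := by push_cast; linarith
        exact_mod_cast this
      · have : (a : ℝ) ≤ (⌈x⌉ : ℤ) := by linarith
        exact_mod_cast this
    have hsub : (S : Set ℤ) ⊆ {a : ℤ | a ∈ A ∧ |(a : ℝ)| ≤ x} := by
      intro a ha
      refine ⟨hSA ha, le_trans ?_ hRad⟩
      exact_mod_cast hSR a ha
    have hn := Set.ncard_le_ncard hsub hfin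
    rw [Set.ncard_coe_finset, hSc] at hn
    have hn' : (2 * k : ℝ) ≤ ({a : ℤ | a ∈ A ∧ |(a : ℝ)| ≤ x}.ncard : ℝ) := by exact_mod_cast hn
    linarith
  obtain ⟨k, hk⟩ := hmem
  exact h2 k hk.symm
end

section
/- Let f : ℤ → ℕ ∪ {∞} be any function such that f⁻¹(0) is finite. Then there exist uncountably many sets A of integers such that the restricted representation function satisfies r̂_{A,2}(n) = f(n) for all integers n, and such that there are constants c_0 > 0 and x_0 with: the number of elements a ∈ A with |a| ≤ x is at least c_0 · x^{1/3} for all x ≥ x_0. -/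
/-- The restricted representation function of order 2: the number (in `ℕ∞`) of
ways to write `n = a₁ + a₂` with `a₁, a₂ ∈ A` and `a₁ < a₂`. -/
noncomputable def rep2res (A : Set ℤ) (n : ℤ) : ℕ∞ :=
  {p : ℤ × ℤ | p.1 ∈ A ∧ p.2 ∈ A ∧ p.1 < p.2 ∧ p.1 + p.2 = n}.encard

open Classical in
lemma rep_insert (A : Set ℤ) (c : ℤ) (hc : c ∉ A) (n : ℤ) :
    rep2res (insert c A) n = rep2res A n + (if n - c ∈ A then 1 else 0) := by
  unfold rep2res
  split_ifs with h
  · have hne : n - c ≠ c := fun h' => hc (h' ▸ h)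
    rw [← Set.encard_insert_of_notMem (a := (min c (n - c), max c (n - c)))]
    · congr 1
      ext ⟨x, y⟩
      simp only [Set.mem_insert_iff, Set.mem_setOf_eq, Prod.mk.injEq]
      constructor
      · rintro ⟨hx | hx, hy | hy, hlt, hs⟩
        · omega
        · left; omega
        · left; omega
        · right; exact ⟨hx, hy, hlt, hs⟩
      · rintro (⟨hx, hy⟩ | ⟨hx, hy, hlt, hs⟩)
        · rcases lt_or_gt_of_ne hne with h1 | h1
          · rw [min_eq_right h1.le] at hx
            rw [max_eq_left h1.le] at hy
            subst hx hy
            exact ⟨Or.inr h, Or.inl rfl, h1, by ring⟩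
          · rw [min_eq_left h1.le] at hx
            rw [max_eq_right h1.le] at hy
            subst hx hy
            exact ⟨Or.inl rfl, Or.inr h, h1, by ring⟩
        · exact ⟨Or.inr hx, Or.inr hy, hlt, hs⟩
    · simp only [Set.mem_setOf_eq]
      rintro ⟨h1, h2, -⟩
      rcases le_total c (n - c) with h3 | h3
      · rw [min_eq_left h3] at h1; exact hc h1
      · rw [max_eq_left h3] at h2; exact hc h2
  · rw [add_zero]
    congr 1
    ext ⟨x, y⟩
    simp only [Set.mem_insert_iff, Set.mem_setOf_eq]
    constructor
    · rintro ⟨hx | hx, hy | hy, hlt, hs⟩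
      · omega
      · exact absurd (by rwa [show n - c = y by omega]) h
      · exact absurd (by rwa [show n - c = x by omega]) h
      · exact ⟨hx, hy, hlt, hs⟩
    · rintro ⟨hx, hy, hlt, hs⟩
      exact ⟨Or.inr hx, Or.inr hy, hlt, hs⟩

lemma rep_mono {A B : Set ℤ} (h : A ⊆ B) (n : ℤ) : rep2res A n ≤ rep2res B n := by
  apply Set.encard_le_encard
  rintro ⟨x, y⟩ ⟨h1, h2, h3⟩
  exact ⟨h h1, h h2, h3⟩

lemma rep_zero {A : Set ℤ} {n : ℤ} (h : ∀ a ∈ A, ∀ b ∈ A, a + b ≠ n) : rep2res A n = 0 := by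
  unfold rep2res
  rw [Set.encard_eq_zero]
  ext ⟨x, y⟩
  simp only [Set.mem_setOf_eq, Set.mem_empty_iff_false, iff_false]
  rintro ⟨h1, h2, -, h4⟩
  exact h _ h1 _ h2 h4

/-- inserting an element with only new sums keeps the upper bound -/
lemma insert_ok (f : ℤ → ℕ∞) (A : Set ℤ) (c : ℤ) (hc : c ∉ A) (hA : ∀ n, rep2res A n ≤ f n)
    (h : ∀ a ∈ A, f (a + c) ≠ 0 ∧ ∀ b ∈ A, ∀ b' ∈ A, b + b' ≠ a + c) (n : ℤ) :
    rep2res (insert c A) n ≤ f n := by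
  rw [rep_insert A c hc n]
  split_ifs with hn
  · obtain ⟨h1, h2⟩ := h _ hn
    rw [sub_add_cancel] at h1 h2
    rw [rep_zero h2, zero_add]
    exact Order.one_le_iff_pos.mpr (pos_iff_ne_zero.mpr h1)
  · simpa using hA n

lemma finset_bound (S : Finset ℤ) : ∃ M : ℤ, 0 ≤ M ∧ ∀ x ∈ S, |x| ≤ M := by
  refine ⟨∑ x ∈ S, |x|, Finset.sum_nonneg fun _ _ => abs_nonneg _, fun x hx => ?_⟩
  exact Finset.single_le_sum (f := fun x : ℤ => |x|) (fun _ _ => abs_nonneg _) hx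

lemma pair_step (f : ℤ → ℕ∞) (hf : (f ⁻¹' {0}).Finite) (A F : Finset ℤ) (hAF : Disjoint A F)
    (hA : ∀ n, rep2res (A : Set ℤ) n ≤ f n) (t : ℤ) :
    ∃ A' : Finset ℤ, A ⊆ A' ∧ Disjoint A' F ∧ (∀ n, rep2res (A' : Set ℤ) n ≤ f n) ∧
      A'.card ≤ A.card + 2 ∧
      (rep2res (A : Set ℤ) t < f t → rep2res (A : Set ℤ) t + 1 ≤ rep2res (A' : Set ℤ) t) := by
  by_cases ht : rep2res (A : Set ℤ) t < f t
  swap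
  · exact ⟨A, subset_rfl, hAF, hA, by omega, fun h => absurd h ht⟩
  obtain ⟨M, hM0, hM⟩ := finset_bound (A ∪ F ∪ hf.toFinset ∪ {t})
  have hMA : ∀ x ∈ A, -M ≤ x ∧ x ≤ M := fun x hx => abs_le.mp (hM x (by simp [hx]))
  have hMF : ∀ x ∈ F, -M ≤ x ∧ x ≤ M := fun x hx => abs_le.mp (hM x (by simp [hx]))
  have hMZ : ∀ x, f x = 0 → -M ≤ x ∧ x ≤ M := fun x hx => abs_le.mp (hM x (by simp [hx]))
  have hMt : -M ≤ t ∧ t ≤ M := abs_le.mp (hM t (by simp))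
  obtain ⟨c, hc⟩ : ∃ c, c = 10 * M + 10 := ⟨_, rfl⟩
  have hcA : c ∉ (A : Set ℤ) := fun h => by have := hMA c h; omega
  have hcA' : t - c ∉ (insert c A : Set ℤ) := by
    rintro (h | h)
    · omega
    · have := hMA _ h; omega
  have key : ∀ n, rep2res (insert (t - c) (insert c (A : Set ℤ))) n =
    _ := fun n => rep_insert _ _ hcA' n
  have hins : ∀ n, rep2res (insert c (A : Set ℤ)) n ≤ f n := by
    apply insert_ok f _ _ hcA hA
    intro a ha
    refine ⟨fun h => ?_, fun b hb b' hb' h => ?_⟩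
    · have := hMZ _ h; have := hMA _ ha; omega
    · have := hMA _ ha; have := hMA _ hb; have := hMA _ hb'; omega
  have htt : rep2res (insert c (A : Set ℤ)) t = rep2res (A : Set ℤ) t := by
    rw [rep_insert _ _ hcA, if_neg, add_zero]
    intro h; exact hcA' (Or.inr h)
  have hfin : rep2res (insert (t - c) (insert c (A : Set ℤ))) t = rep2res (A : Set ℤ) t + 1 := by
    rw [key, if_pos (by left; ring), htt]
  refine ⟨insert (t - c) (insert c A), ?_, ?_, ?_, ?_, ?_⟩
  · intro x hx; simp [hx]
  · rw [Finset.disjoint_insert_left, Finset.disjoint_insert_left]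
    refine ⟨fun h => ?_, fun h => ?_, hAF⟩ <;> have := hMF _ h <;> omega
  · intro n
    push_cast
    by_cases hn : n = t
    · subst hn
      rw [hfin]
      exact Order.add_one_le_of_lt ht
    rw [key]
    split_ifs with hm
    · rcases hm with hm | hm
      · omega
      have h1 := hMA _ hm
      rw [rep_zero, zero_add]
      · refine Order.one_le_iff_pos.mpr (pos_iff_ne_zero.mpr fun h => ?_)
        have := hMZ _ h; omega
      · rintro a (ha | ha) b (hb | hb) hab
        · omega
        · have := hMA _ hb; omega
        · have := hMA _ ha; omega
        · have := hMA _ ha; have := hMA _ hb; omega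
    · rw [add_zero]; exact hins n
  · exact (Finset.card_insert_le _ _).trans (by have := Finset.card_insert_le c A; omega)
  · intro _
    push_cast
    exact hfin.ge

open Pointwise in
lemma dens_step (f : ℤ → ℕ∞) (hf : (f ⁻¹' {0}).Finite) (A F : Finset ℤ) (hAF : Disjoint A F)
    (hA : ∀ n, rep2res (A : Set ℤ) n ≤ f n) (B : Set ℤ) (k : ℕ)
    (h1 : A.card ≤ 3 * k + 2) (h2 : F.card ≤ k) :
    ∃ A' F' : Finset ℤ, ∃ d : ℤ, A' = insert d A ∧ F ⊆ F' ∧ Disjoint A' F' ∧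
      (∀ n, rep2res (A' : Set ℤ) n ≤ f n) ∧ F'.card ≤ F.card + 1 ∧ d ∉ A ∧ 1 ≤ d ∧
      d ≤ (40 + 3 * hf.toFinset.card : ℕ) * ((k : ℤ) + 1) ^ 3 ∧
      ((∃ x ∈ A', x ∉ B) ∨ ∃ x ∈ F', x ∈ B) := by
  set z := hf.toFinset.card with hz
  set bad := A ∪ F ∪ ((hf.toFinset ∪ (A + A)) - A) with hbad
  have hcard : bad.card ≤ A.card + F.card + (z + A.card * A.card) * A.card := by
    refine (Finset.card_union_le _ _).trans (add_le_add (Finset.card_union_le _ _) ?_)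
    refine Finset.card_sub_le.trans (Nat.mul_le_mul_right _ ?_)
    exact (Finset.card_union_le _ _).trans (add_le_add le_rfl Finset.card_add_le)
  set N : ℕ := (40 + 3 * z) * (k + 1) ^ 3 with hN
  have hlt : bad.card + 1 < N := by
    have e1 : (z + A.card * A.card) * A.card ≤ (z + (3 * (k + 1)) * (3 * (k + 1))) * (3 * (k + 1)) := by
      have : A.card ≤ 3 * (k + 1) := by omega
      gcongr
    have e2 : k + 1 ≤ (k + 1) ^ 3 := Nat.le_self_pow (by norm_num) _
    have e3 : z * (k + 1) ≤ z * (k + 1) ^ 3 := Nat.mul_le_mul_left _ e2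
    have e4 : N = 40 * (k + 1) ^ 3 + 3 * (z * (k + 1) ^ 3) := by rw [hN]; ring
    have e5 : (z + (3 * (k + 1)) * (3 * (k + 1))) * (3 * (k + 1)) =
      3 * (z * (k + 1)) + 27 * (k + 1) ^ 3 := by ring
    omega
  have hsd : 1 < (Finset.Icc (1 : ℤ) N \ bad).card := by
    have := Finset.le_card_sdiff bad (Finset.Icc (1 : ℤ) N)
    rw [Int.card_Icc] at this
    omega
  obtain ⟨x, hx, y, hy, hxy⟩ := Finset.one_lt_card.mp hsd
  have good : ∀ d ∈ Finset.Icc (1 : ℤ) N \ bad, d ∉ A ∧ d ∉ F ∧ 1 ≤ d ∧ d ≤ N ∧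
      ∀ n, rep2res ((insert d A : Finset ℤ) : Set ℤ) n ≤ f n := by
    intro d hd
    rw [Finset.mem_sdiff, Finset.mem_Icc, hbad, Finset.mem_union, Finset.mem_union] at hd
    obtain ⟨⟨hd1, hd2⟩, hd3⟩ := hd
    have hdA : d ∉ A := fun h => hd3 (Or.inl (Or.inl h))
    refine ⟨hdA, fun h => hd3 (Or.inl (Or.inr h)), hd1, hd2, ?_⟩
    push_cast
    apply insert_ok f _ _ (by simpa using hdA) hA
    intro a ha
    refine ⟨fun h => hd3 (Or.inr ?_), fun b hb b' hb' h => hd3 (Or.inr ?_)⟩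
    · exact Finset.mem_sub.mpr ⟨a + d, Finset.mem_union_left _ (by simpa using h), a, ha, by ring⟩
    · exact Finset.mem_sub.mpr ⟨a + d, Finset.mem_union_right _
        (Finset.mem_add.mpr ⟨b, hb, b', hb', h⟩), a, ha, by ring⟩
  have hNc : (N : ℤ) = (40 + 3 * z : ℕ) * ((k : ℤ) + 1) ^ 3 := by rw [hN]; push_cast; ring
  rw [← hNc]
  obtain ⟨x1, x2, x3, x4, x5⟩ := good x hx
  obtain ⟨y1, y2, y3, y4, y5⟩ := good y hy
  by_cases hB : x ∈ B
  · refine ⟨insert y A, insert x F, y, rfl, Finset.subset_insert _ _, ?_, y5,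
      Finset.card_insert_le _ _, y1, y3, y4, Or.inr ⟨x, by simp, hB⟩⟩
    rw [Finset.disjoint_insert_left, Finset.disjoint_insert_right, Finset.mem_insert]
    exact ⟨by rintro (h | h); exacts [hxy h.symm, y2 h], x1, hAF⟩
  · refine ⟨insert x A, F, x, rfl, subset_rfl, ?_, x5, by omega, x1, x3, x4,
      Or.inl ⟨x, by simp, hB⟩⟩
    rw [Finset.disjoint_insert_left]
    exact ⟨x2, hAF⟩

lemma exists_seq_step {α : Type*} (I : ℕ → α → Prop) (S : ℕ → α → α → Prop) (h0 : ∃ a, I 0 a)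
    (hs : ∀ k a, I k a → ∃ b, I (k + 1) b ∧ S k a b) :
    ∃ s : ℕ → α, ∀ k, I k (s k) ∧ S k (s k) (s (k + 1)) := by
  obtain ⟨a0, ha0⟩ := h0
  choose g hg1 hg2 using hs
  let s : (k : ℕ) → {a // I k a} := fun k =>
    Nat.rec ⟨a0, ha0⟩ (fun k p => ⟨g k p.1 p.2, hg1 k p.1 p.2⟩) k
  exact ⟨fun k => (s k).1, fun k => ⟨(s k).2, hg2 k (s k).1 (s k).2⟩⟩

lemma main_seq (f : ℤ → ℕ∞) (hf : (f ⁻¹' {0}).Finite) (B : ℕ → Set ℤ) (t : ℕ → ℤ) :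
    ∃ (K : ℕ) (A F : ℕ → Finset ℤ), 0 < K ∧ Monotone A ∧ Monotone F ∧ (∀ k, Disjoint (A k) (F k)) ∧
      (∀ k n, rep2res (A k : Set ℤ) n ≤ f n) ∧
      (∀ k, k ≤ ((A k).filter fun a => 1 ≤ a ∧ a ≤ (K : ℤ) * (k : ℤ) ^ 3).card) ∧
      (∀ k, rep2res (A k : Set ℤ) (t k) < f (t k) →
        rep2res (A k : Set ℤ) (t k) + 1 ≤ rep2res (A (k + 1) : Set ℤ) (t k)) ∧
      ∀ k, (∃ x ∈ A (k + 1), x ∉ B k) ∨ ∃ x ∈ F (k + 1), x ∈ B k := by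
  set K := 40 + 3 * hf.toFinset.card with hK
  obtain ⟨s, hs⟩ := exists_seq_step (α := Finset ℤ × Finset ℤ)
    (fun k p => Disjoint p.1 p.2 ∧ (∀ n, rep2res (p.1 : Set ℤ) n ≤ f n) ∧
      (k ≤ (p.1.filter fun a => 1 ≤ a ∧ a ≤ (K : ℤ) * (k : ℤ) ^ 3).card) ∧
      p.1.card ≤ 3 * k ∧ p.2.card ≤ k)
    (fun k p q => p.1 ⊆ q.1 ∧ p.2 ⊆ q.2 ∧ (rep2res (p.1 : Set ℤ) (t k) < f (t k) →
        rep2res (p.1 : Set ℤ) (t k) + 1 ≤ rep2res (q.1 : Set ℤ) (t k)) ∧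
        ((∃ x ∈ q.1, x ∉ B k) ∨ ∃ x ∈ q.2, x ∈ B k))
    ⟨(∅, ∅), by simp, fun n => by rw [rep_zero (by simp)]; exact zero_le, by simp, by simp, by simp⟩
    (by
      rintro k ⟨A, F⟩ ⟨hAF, hA, hd, hc1, hc2⟩
      dsimp only at *
      obtain ⟨A1, hAA1, hA1F, hA1, hA1c, hA1t⟩ := pair_step f hf A F hAF hA (t k)
      obtain ⟨A2, F2, d, hA2, hFF2, hA2F, hA2r, hF2c, hdA, hd1, hd2, hB⟩ :=
        dens_step f hf A1 F hA1F hA1 (B k) k (by omega) hc2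
      have hsub : A1 ⊆ A2 := by rw [hA2]; exact Finset.subset_insert _ _
      refine ⟨(A2, F2), ⟨hA2F, hA2r, ?_, ?_, ?_⟩, hAA1.trans hsub, hFF2, fun h =>
        (hA1t h).trans (rep_mono (by exact_mod_cast hsub) _), hB⟩
      · dsimp only
        set G := A.filter fun a => 1 ≤ a ∧ a ≤ (K : ℤ) * (k : ℤ) ^ 3
        have hdG : d ∉ G := fun h => hdA (hAA1 (Finset.mem_filter.mp h).1)
        have hle : (K : ℤ) * (k : ℤ) ^ 3 ≤ (K : ℤ) * ((k : ℤ) + 1) ^ 3 := by gcongr; omega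
        have : insert d G ⊆ A2.filter fun a => 1 ≤ a ∧ a ≤ (K : ℤ) * ((k + 1 : ℕ) : ℤ) ^ 3 := by
          intro x hx
          rw [Finset.mem_filter]
          push_cast
          rcases Finset.mem_insert.mp hx with rfl | hx
          · exact ⟨by rw [hA2]; simp, hd1, hd2⟩
          · obtain ⟨u, v, w⟩ := Finset.mem_filter.mp hx
            exact ⟨hsub (hAA1 u), v, w.trans hle⟩
        have := Finset.card_le_card this
        rw [Finset.card_insert_of_notMem hdG] at this
        omega
      · have := Finset.card_insert_le d A1
        rw [← hA2] at this
        dsimp only; omega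
      · dsimp only; omega)
  refine ⟨K, fun k => (s k).1, fun k => (s k).2, by omega, monotone_nat_of_le_succ fun k => (hs k).2.1,
    monotone_nat_of_le_succ fun k => (hs k).2.2.1, fun k => (hs k).1.1, fun k => (hs k).1.2.1,
    fun k => (hs k).1.2.2.1, fun k => (hs k).2.2.2.1, fun k => (hs k).2.2.2.2⟩

lemma exists_good_s4 (f : ℤ → ℕ∞) (hf : (f ⁻¹' {0}).Finite) (B : ℕ → Set ℤ) :
    ∃ A : Set ℤ, ((∀ n : ℤ, rep2res A n = f n) ∧
      ∃ c₀ x₀ : ℝ, 0 < c₀ ∧ ∀ x : ℝ, x₀ ≤ x →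
        c₀ * x ^ ((1 : ℝ) / 3) ≤ ({a : ℤ | a ∈ A ∧ |(a : ℝ)| ≤ x}.ncard : ℝ)) ∧
      ∀ k, A ≠ B k := by
  obtain ⟨t, ht⟩ : ∃ t : ℕ → ℤ, ∀ n k, ∃ k', k ≤ k' ∧ t k' = n := by
    obtain ⟨e⟩ : Nonempty (ℤ ≃ ℕ) := ⟨Denumerable.eqv ℤ⟩
    refine ⟨fun k => e.symm k.unpair.1, fun n k => ⟨Nat.pair (e n) k, Nat.right_le_pair _ _, by simp⟩⟩
  obtain ⟨K, A, F, hK, hAm, hFm, hd, hr, hden, hstep, hB⟩ := main_seq f hf B t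
  have hsub : ∀ k, (A k : Set ℤ) ⊆ ⋃ k, (A k : Set ℤ) := fun k => Set.subset_iUnion (fun k => (A k : Set ℤ)) k
  refine ⟨⋃ k, (A k : Set ℤ), ⟨fun n => le_antisymm ?_ ?_, ?_⟩, ?_⟩
  · by_contra hcon
    rw [not_le] at hcon
    have h1 := Order.add_one_le_of_lt hcon
    obtain ⟨T, hT, hTc⟩ := Set.exists_subset_encard_eq h1
    have hfin : T.Finite := by
      rw [← Set.encard_ne_top_iff, hTc]
      have : f n ≠ ⊤ := hcon.ne_top
      simpa using this
    have hk : ∃ k, ∀ p ∈ T, p.1 ∈ A k ∧ p.2 ∈ A k := by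
      have h2 : ∀ p ∈ T, ∃ k, p.1 ∈ A k ∧ p.2 ∈ A k := by
        intro p hp
        obtain ⟨h3, h4, -⟩ := hT hp
        obtain ⟨i, hi⟩ := Set.mem_iUnion.mp h3
        obtain ⟨j, hj⟩ := Set.mem_iUnion.mp h4
        exact ⟨max i j, hAm (le_max_left _ _) hi, hAm (le_max_right _ _) hj⟩
      choose! g hg using h2
      obtain ⟨m, hm⟩ := (hfin.image g).bddAbove
      refine ⟨m, fun p hp => ?_⟩
      have := hm (Set.mem_image_of_mem g hp)
      exact ⟨hAm this (hg p hp).1, hAm this (hg p hp).2⟩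
    obtain ⟨k, hk⟩ := hk
    have h5 : T.encard ≤ rep2res (A k : Set ℤ) n := by
      apply Set.encard_le_encard
      intro p hp
      exact ⟨(hk p hp).1, (hk p hp).2, (hT hp).2.2⟩
    rw [hTc] at h5
    have h6 := h5.trans (hr k n)
    exact absurd h6 (not_le.mpr (ENat.lt_add_one_iff hcon.ne_top |>.mpr le_rfl))
  · have key : ∀ m : ℕ, (m : ℕ∞) ≤ f n → ∃ k, (m : ℕ∞) ≤ rep2res (A k : Set ℤ) n := by
      intro m
      induction m with
      | zero => intro _; exact ⟨0, by simp⟩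
      | succ m ih =>
        intro hm
        have hlt : (m : ℕ∞) < f n := lt_of_lt_of_le (by exact_mod_cast Nat.lt_succ_self m) hm
        obtain ⟨k, hk⟩ := ih hlt.le
        obtain ⟨k', hkk, rfl⟩ := ht n k
        have h1 : (m : ℕ∞) ≤ rep2res (A k' : Set ℤ) (t k') :=
          hk.trans (rep_mono (by exact_mod_cast hAm hkk) _)
        rcases h1.eq_or_lt with h2 | h2
        · refine ⟨k' + 1, ?_⟩
          have := hstep k' (by rw [← h2]; exact hlt)
          rw [← h2] at this
          exact_mod_cast this
        · exact ⟨k', by push_cast; exact Order.add_one_le_of_lt h2⟩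
    refine ENat.forall_natCast_le_iff_le.mp fun m hm => ?_
    obtain ⟨k, hk⟩ := key m hm
    exact hk.trans (rep_mono (hsub k) n)
  · have hK' : (0 : ℝ) < K := by exact_mod_cast hK
    refine ⟨1 / (2 * (K : ℝ) ^ ((1 : ℝ) / 3)), K, by positivity, fun x hx => ?_⟩
    have hx0 : 0 < x := hK'.trans_le hx
    set y : ℝ := (x / K) ^ ((1 : ℝ) / 3) with hy
    have hy3 : y ^ 3 = x / K := by
      rw [hy, ← Real.rpow_natCast, ← Real.rpow_mul (by positivity)]; norm_num
    have hy1 : 1 ≤ y := Real.one_le_rpow ((one_le_div hK').mpr hx) (by norm_num)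
    set k := ⌊y⌋₊ with hk
    have hk1 : (k : ℝ) ≤ y := Nat.floor_le (by linarith)
    have hk2 : y < k + 1 := Nat.lt_floor_add_one y
    have hk3 : (1 : ℝ) ≤ k := by
      exact_mod_cast (Nat.one_le_floor_iff y).mpr hy1
    have hKk : (K : ℝ) * (k : ℝ) ^ 3 ≤ x := by
      calc (K : ℝ) * (k : ℝ) ^ 3 ≤ K * y ^ 3 := by gcongr
        _ = x := by rw [hy3]; field_simp
    have hlhs : 1 / (2 * (K : ℝ) ^ ((1 : ℝ) / 3)) * x ^ ((1 : ℝ) / 3) = y / 2 := by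
      rw [hy, Real.div_rpow hx0.le hK'.le]; field_simp
    rw [hlhs]
    have hfin : {a : ℤ | a ∈ ⋃ k, (A k : Set ℤ) ∧ |(a : ℝ)| ≤ x}.Finite := by
      refine (Set.finite_Icc (-⌈x⌉) ⌈x⌉).subset ?_
      rintro a ⟨-, ha⟩
      rw [abs_le] at ha
      have := Int.le_ceil x
      constructor
      · have : ((-⌈x⌉ : ℤ) : ℝ) ≤ a := by push_cast; linarith
        exact_mod_cast this
      · have : (a : ℝ) ≤ (⌈x⌉ : ℤ) := by linarith
        exact_mod_cast this
    have hle : k ≤ {a : ℤ | a ∈ ⋃ k, (A k : Set ℤ) ∧ |(a : ℝ)| ≤ x}.ncard := by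
      refine (hden k).trans ?_
      rw [← Set.ncard_coe_finset]
      refine Set.ncard_le_ncard ?_ hfin
      intro a ha
      obtain ⟨h1, h2, h3⟩ := Finset.mem_filter.mp ha
      refine ⟨hsub k h1, ?_⟩
      have h2' : (1 : ℝ) ≤ a := by exact_mod_cast h2
      have h3' : (a : ℝ) ≤ K * (k : ℝ) ^ 3 := by exact_mod_cast h3
      rw [abs_of_nonneg (by linarith)]
      linarith
    have : (k : ℝ) ≤ ({a : ℤ | a ∈ ⋃ k, (A k : Set ℤ) ∧ |(a : ℝ)| ≤ x}.ncard : ℝ) := by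
      exact_mod_cast hle
    linarith
  · intro k hk
    rcases hB k with ⟨x, hx, hxB⟩ | ⟨x, hx, hxB⟩
    · exact hxB (hk ▸ hsub _ hx)
    · rw [← hk] at hxB
      obtain ⟨j, hj⟩ := Set.mem_iUnion.mp hxB
      exact Finset.disjoint_left.mp (hd (max j (k + 1))) (hAm (le_max_left _ _) hj)
        (hFm (le_max_right _ _) hx)

theorem stmt4 (f : ℤ → ℕ∞) (hf : (f ⁻¹' {0}).Finite) :
    ¬ Set.Countable {A : Set ℤ |
      (∀ n : ℤ, rep2res A n = f n) ∧
      ∃ c₀ x₀ : ℝ, 0 < c₀ ∧ ∀ x : ℝ, x₀ ≤ x →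
        c₀ * x ^ ((1 : ℝ) / 3) ≤ ({a : ℤ | a ∈ A ∧ |(a : ℝ)| ≤ x}.ncard : ℝ)} := by
  intro hc
  obtain ⟨B, hB⟩ := Set.countable_iff_exists_subset_range.mp hc
  obtain ⟨A, hA, hne⟩ := exists_good_s4 f hf B
  obtain ⟨k, hk⟩ := hB hA
  exact hne k hk.symm
end

section
/- Let h ≥ 2 be an integer and let f : ℤ → ℕ ∪ {∞} be any function such that f⁻¹(0) is finite. Then there exist uncountably many sets A of integers such that the restricted representation function satisfies r̂_{A,h}(n) = f(n) for all integers n, and such that there are constants c_0 > 0 and x_0 with: the number of elements a ∈ A with |a| ≤ x is at least c_0 · x^{1/(2h-1)} for all x ≥ x_0. -/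
open scoped BigOperators

/-- The restricted representation function of order `h`: the number (in `ℕ∞`)
of ways to write `n = a₁ + a₂ + ⋯ + a_h` with all `aᵢ ∈ A` and
`a₁ < a₂ < ⋯ < a_h` (pairwise distinct elements of `A`). -/
noncomputable def repHres (h : ℕ) (A : Set ℤ) (n : ℤ) : ℕ∞ :=
  {a : Fin h → ℤ | (∀ i, a i ∈ A) ∧ StrictMono a ∧ ∑ i, a i = n}.encard

/-- The slopes of the new elements. -/
def lam (d : ℕ) (i : ℕ) : ℤ := if i = d then -((2:ℤ) ^ d - 1) else 2 ^ i

lemma sum_two_pow_le (d : ℕ) (S : Finset ℕ) (hS : S ⊆ Finset.range d) :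
    ∑ i ∈ S, 2 ^ i ≤ 2 ^ d - 1 := by
  calc ∑ i ∈ S, 2 ^ i ≤ ∑ i ∈ Finset.range d, 2 ^ i := Finset.sum_le_sum_of_subset hS
    _ = 2 ^ d - 1 := by rw [Nat.geomSum_eq le_rfl]; simp

lemma sum_two_pow_eq (d : ℕ) (S : Finset ℕ) (hS : ∑ i ∈ S, 2 ^ i = 2 ^ d - 1) :
    S = Finset.range d := by
  apply Finset.geomSum_injective (n := 2) le_rfl
  simp only
  rw [hS, Nat.geomSum_eq le_rfl]; simp

lemma lam_sum (d : ℕ) (S : Finset ℕ) :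
    ∑ i ∈ S, lam d i = ((∑ i ∈ S.erase d, 2 ^ i : ℕ) : ℤ) - if d ∈ S then (2:ℤ) ^ d - 1 else 0 := by
  have key : ∑ i ∈ S.erase d, lam d i = ((∑ i ∈ S.erase d, 2 ^ i : ℕ) : ℤ) := by
    push_cast
    apply Finset.sum_congr rfl
    intro i hi
    simp [lam, (Finset.mem_erase.1 hi).1]
  rw [← key]
  split_ifs with hd
  · rw [← Finset.add_sum_erase _ _ hd]; simp [lam]; ring
  · rw [Finset.erase_eq_of_notMem hd]; simp

lemma lam_inj (d : ℕ) (S T : Finset ℕ) (hS : S ⊆ Finset.range (d+1)) (hT : T ⊆ Finset.range (d+1))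
    (h : ∑ i ∈ S, lam d i = ∑ i ∈ T, lam d i) :
    S = T ∨ (S = ∅ ∧ T = Finset.range (d+1)) ∨ (S = Finset.range (d+1) ∧ T = ∅) := by
  have aux : ∀ S : Finset ℕ, S ⊆ Finset.range (d+1) → S.erase d ⊆ Finset.range d := by
    intro S hS i hi
    have h1 := Finset.mem_erase.1 hi
    have h2 := Finset.mem_range.1 (hS h1.2)
    have := h1.1
    simp; omega
  have hS1 := sum_two_pow_le d _ (aux S hS)
  have hT1 := sum_two_pow_le d _ (aux T hT)
  have hp : 1 ≤ 2 ^ d := Nat.one_le_two_pow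
  rw [lam_sum, lam_sum] at h
  have cst : ((2 ^ d - 1 : ℕ) : ℤ) = (2:ℤ) ^ d - 1 := by push_cast [hp]; ring
  rw [← cst] at h
  have inj := Finset.geomSum_injective (n := 2) le_rfl
  have hr : Finset.range (d+1) = insert d (Finset.range d) := Finset.range_add_one
  have z : ∀ S : Finset ℕ, ∑ i ∈ S, 2 ^ i = 0 → S = ∅ := by
    intro S hS
    apply inj; simpa using hS
  by_cases hdS : d ∈ S <;> by_cases hdT : d ∈ T <;> simp only [hdS, hdT, if_true, if_false] at h
  · left
    have : S.erase d = T.erase d := inj (by simp only; omega)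
    rw [← Finset.insert_erase hdS, this, Finset.insert_erase hdT]
  · right; right
    have h1 := sum_two_pow_eq d (S.erase d) (by omega)
    have h2 := z (T.erase d) (by omega)
    rw [Finset.erase_eq_of_notMem hdT] at h2
    refine ⟨?_, h2⟩
    rw [← Finset.insert_erase hdS, h1, hr]
  · right; left
    have h1 := sum_two_pow_eq d (T.erase d) (by omega)
    have h2 := z (S.erase d) (by omega)
    rw [Finset.erase_eq_of_notMem hdS] at h2
    refine ⟨h2, ?_⟩
    rw [← Finset.insert_erase hdT, h1, hr]
  · left
    have : S.erase d = T.erase d := inj (by simp only; omega)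
    rwa [Finset.erase_eq_of_notMem hdS, Finset.erase_eq_of_notMem hdT] at this

lemma avoid (Q : Finset (ℤ × ℤ)) :
    ∃ y : ℤ, 1 ≤ y ∧ y ≤ Q.card + 1 ∧ ∀ q ∈ Q, q.1 ≠ 0 → q.1 * y ≠ q.2 := by
  have hc : (Q.image (fun q => q.2 / q.1)).card < (Finset.Icc (1:ℤ) (Q.card + 1)).card := by
    refine lt_of_le_of_lt Finset.card_image_le ?_
    simp
  obtain ⟨y, hy, hn⟩ := Finset.exists_mem_notMem_of_card_lt_card hc
  rw [Finset.mem_Icc] at hy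
  refine ⟨y, hy.1, hy.2, fun q hq h0 he => hn ?_⟩
  rw [Finset.mem_image]
  refine ⟨q, hq, ?_⟩
  rw [← he, Int.mul_ediv_cancel_left _ h0]

/-- Subsets of `A` with at most `j` elements. -/
def smallSub (A : Finset ℤ) (j : ℕ) : Finset (Finset ℤ) :=
  (Finset.range (j+1)).biUnion (fun i => A.powersetCard i)

lemma mem_smallSub {A X : Finset ℤ} {j : ℕ} : X ∈ smallSub A j ↔ X ⊆ A ∧ X.card ≤ j := by
  simp [smallSub, Finset.mem_powersetCard, and_comm]

lemma card_smallSub (A : Finset ℤ) (j : ℕ) : (smallSub A j).card ≤ (j+1) * (A.card + 1) ^ j := by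
  refine Finset.card_biUnion_le.trans ?_
  calc _ ≤ ∑ i ∈ Finset.range (j+1), (A.card + 1) ^ j := by
        apply Finset.sum_le_sum
        intro i hi
        rw [Finset.card_powersetCard]
        refine (Nat.choose_le_pow _ _).trans ?_
        refine (Nat.pow_le_pow_left (Nat.le_succ _) i).trans ?_
        exact Nat.pow_le_pow_right (Nat.succ_pos _) (by simp at hi; omega)
    _ = _ := by simp

def reps (h : ℕ) (A : Finset ℤ) (n : ℤ) : Finset (Finset ℤ) :=
  (A.powersetCard h).filter (fun B => ∑ b ∈ B, b = n)

lemma mem_reps {h : ℕ} {A : Finset ℤ} {n : ℤ} {B : Finset ℤ} :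
    B ∈ reps h A n ↔ B ⊆ A ∧ B.card = h ∧ ∑ b ∈ B, b = n := by
  simp [reps, Finset.mem_powersetCard, and_assoc]

def Sid (h : ℕ) (A : Finset ℤ) : Prop :=
  ∀ B C : Finset ℤ, B ⊆ A → C ⊆ A → B.card = C.card → B.card < h →
    ∑ b ∈ B, b = ∑ b ∈ C, b → B = C

lemma exists_y (d : ℕ) (A W : Finset ℤ) (M : Finset ℕ → ℤ) :
    ∃ y : ℤ, 1 ≤ y ∧ y ≤ ((2 ^ (d+1) * 2 ^ (d+1) * ((d+1) * (A.card + 1) ^ d) * W.card + 1 : ℕ) : ℤ) ∧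
      ∀ S ⊆ Finset.range (d+1), ∀ T ⊆ Finset.range (d+1), ∀ X ⊆ A, X.card ≤ d → ∀ w ∈ W,
        ∑ i ∈ S, lam d i ≠ ∑ i ∈ T, lam d i →
        (∑ i ∈ S, lam d i) * y + M S + ∑ b ∈ X, b ≠ (∑ i ∈ T, lam d i) * y + w := by
  let P := (Finset.range (d+1)).powerset ×ˢ ((Finset.range (d+1)).powerset ×ˢ (smallSub A d ×ˢ W))
  let g : Finset ℕ × (Finset ℕ × (Finset ℤ × ℤ)) → ℤ × ℤ := fun p =>
    (∑ i ∈ p.1, lam d i - ∑ i ∈ p.2.1, lam d i, p.2.2.2 - M p.1 - ∑ b ∈ p.2.2.1, b)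
  obtain ⟨y, h1, h2, h3⟩ := avoid (P.image g)
  refine ⟨y, h1, h2.trans ?_, ?_⟩
  · have : (P.image g).card ≤ 2 ^ (d+1) * 2 ^ (d+1) * ((d+1) * (A.card + 1) ^ d) * W.card := by
      refine Finset.card_image_le.trans ?_
      simp only [P, Finset.card_product, Finset.card_powerset, Finset.card_range]
      calc _ = 2 ^ (d+1) * 2 ^ (d+1) * (smallSub A d).card * W.card := by ring
        _ ≤ _ := by gcongr; exact card_smallSub A d
    exact_mod_cast Nat.succ_le_succ this
  · intro S hS T hT X hX hXc w hw hne he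
    refine h3 (g (S, T, X, w)) (Finset.mem_image_of_mem _ ?_) ?_ ?_
    · simp only [P, Finset.mem_product, Finset.mem_powerset, mem_smallSub]
      exact ⟨hS, hT, ⟨hX, hXc⟩, hw⟩
    · simpa [g] using sub_ne_zero.2 hne
    · simp only [g]; linarith

/-- The new element number `i`. -/
def xel (d : ℕ) (u y : ℤ) (i : ℕ) : ℤ := lam d i * y + if i = d then u else 0

def Msum (d : ℕ) (u : ℤ) (S : Finset ℕ) : ℤ := ∑ i ∈ S, if i = d then u else 0

lemma xel_sum (d : ℕ) (u y : ℤ) (S : Finset ℕ) :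
    ∑ i ∈ S, xel d u y i = (∑ i ∈ S, lam d i) * y + Msum d u S := by
  simp only [xel, Msum, Finset.sum_add_distrib, Finset.sum_mul]

lemma lam_range (d : ℕ) : ∑ i ∈ Finset.range (d+1), lam d i = 0 := by
  have h0 : Finset.range (d+1) = insert d (Finset.range d) := Finset.range_add_one
  rw [lam_sum, h0, Finset.erase_insert (by simp), Nat.geomSum_eq le_rfl]
  have hp : 1 ≤ 2 ^ d := Nat.one_le_two_pow
  simp

lemma Msum_range (d : ℕ) (u : ℤ) : Msum d u (Finset.range (d+1)) = u := by
  simp [Msum]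

lemma xel_bound (d : ℕ) (u y : ℤ) (hy : 1 ≤ y) (i : ℕ) (hi : i < d + 1) :
    |xel d u y i| ≤ 2 ^ d * y + |u| := by
  have h1 : |lam d i| ≤ 2 ^ d := by
    unfold lam
    have hp : (1:ℤ) ≤ 2 ^ d := one_le_pow₀ (by norm_num)
    split_ifs
    · rw [abs_neg, abs_of_nonneg] <;> linarith
    · rw [abs_of_nonneg (by positivity)]
      exact pow_le_pow_right₀ (by norm_num) (by omega)
  unfold xel
  refine (abs_add_le _ _).trans ?_
  rw [abs_mul, abs_of_pos (by linarith : 0 < y)]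
  have h2 : |if i = d then u else 0| ≤ |u| := by split_ifs <;> simp
  have := mul_le_mul_of_nonneg_right h1 (by linarith : 0 ≤ y)
  linarith

lemma key_step (d : ℕ) (hd : 1 ≤ d) (f : ℤ → ℕ∞) (Z : Finset ℤ) (hZ : ∀ z, f z = 0 → z ∈ Z)
    (A F W : Finset ℤ) (u y : ℤ)
    (hAF : Disjoint A F) (hsid : Sid (d+1) A) (hrf : ∀ n, ((reps (d+1) A n).card : ℕ∞) ≤ f n)
    (hu : ((reps (d+1) A u).card : ℕ∞) < f u)
    (hW1 : ∀ T ⊆ Finset.range (d+1), ∀ Y ⊆ A, Y.card ≤ d+1 → Msum d u T + ∑ b ∈ Y, b ∈ W)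
    (hW2 : Z ⊆ W) (hW3 : F ⊆ W)
    (hy : ∀ S ⊆ Finset.range (d+1), ∀ T ⊆ Finset.range (d+1), ∀ X ⊆ A, X.card ≤ d → ∀ w ∈ W,
        ∑ i ∈ S, lam d i ≠ ∑ i ∈ T, lam d i →
        (∑ i ∈ S, lam d i) * y + Msum d u S + ∑ b ∈ X, b ≠ (∑ i ∈ T, lam d i) * y + w) :
    ∃ A' : Finset ℤ, A' = A ∪ (Finset.range (d+1)).image (xel d u y) ∧
      A'.card = A.card + (d+1) ∧ Disjoint A' F ∧
      Sid (d+1) A' ∧ (∀ n, ((reps (d+1) A' n).card : ℕ∞) ≤ f n) ∧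
      (reps (d+1) A u).card < (reps (d+1) A' u).card := by
  have lamne : ∀ i ∈ Finset.range (d+1), ∑ j ∈ {i}, lam d j ≠ ∑ j ∈ (∅ : Finset ℕ), lam d j := by
    intro i hi he
    rcases lam_inj d {i} ∅ (by simpa using hi) (by simp) he with h | ⟨h, _⟩ | ⟨h, _⟩
    · simp at h
    · simp at h
    · have := congrArg Finset.card h
      simp at this; omega
  have hsing : ∀ i ∈ Finset.range (d+1), ∀ w ∈ W, xel d u y i ≠ w := by
    intro i hi w hw he
    refine hy {i} (by simpa using hi) ∅ (by simp) ∅ (by simp) (by simp) w hw (lamne i hi) ?_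
    rw [← xel_sum]; simpa using he
  have hAW : A ⊆ W := by
    intro a ha
    have := hW1 ∅ (by simp) {a} (by simpa using ha) (by simp)
    simpa [Msum] using this
  have hinj : Set.InjOn (xel d u y) (Finset.range (d+1)) := by
    intro i hi j hj he
    by_contra hij
    refine hy {i} (by simpa using hi) {j} (by simpa using hj) ∅ (by simp) (by simp) (Msum d u {j})
      ?_ ?_ ?_
    · simpa using hW1 {j} (by simpa using hj) ∅ (by simp) (by simp)
    · intro h
      rcases lam_inj d {i} {j} (by simpa using hi) (by simpa using hj) h with h | ⟨h, _⟩ | ⟨_, h⟩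
      · simp at h; exact hij h
      · simp at h
      · simp at h
    · rw [← xel_sum, ← xel_sum]; simpa using he
  set N := (Finset.range (d+1)).image (xel d u y) with hN
  have hAN : Disjoint A N := by
    rw [Finset.disjoint_left]
    intro a ha haN
    obtain ⟨i, hi, he⟩ := Finset.mem_image.1 haN
    exact hsing i hi a (hAW ha) he
  have hNF : Disjoint N F := by
    rw [Finset.disjoint_left]
    intro a haN haF
    obtain ⟨i, hi, he⟩ := Finset.mem_image.1 haN
    exact hsing i hi a (hW3 haF) he
  have hNc : N.card = d + 1 := by
    rw [hN, Finset.card_image_of_injOn hinj, Finset.card_range]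
  have hNs : ∑ b ∈ N, b = u := by
    rw [hN, Finset.sum_image hinj, xel_sum, lam_range, Msum_range]; ring
  -- decomposition
  have dec : ∀ B ⊆ A ∪ N, ∃ S ⊆ Finset.range (d+1), ∃ X ⊆ A, B = X ∪ S.image (xel d u y) ∧
      B.card = X.card + S.card ∧
      ∑ b ∈ B, b = (∑ i ∈ S, lam d i) * y + Msum d u S + ∑ b ∈ X, b := by
    intro B hB
    have hSs : (Finset.range (d+1)).filter (fun i => xel d u y i ∈ B) ⊆ Finset.range (d+1) :=
      Finset.filter_subset _ _
    refine ⟨(Finset.range (d+1)).filter (fun i => xel d u y i ∈ B), hSs,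
      B ∩ A, Finset.inter_subset_right, ?_⟩
    set S := (Finset.range (d+1)).filter (fun i => xel d u y i ∈ B) with hS
    have hBe : B = (B ∩ A) ∪ S.image (xel d u y) := by
      ext b
      simp only [Finset.mem_union, Finset.mem_inter, Finset.mem_image, hS, Finset.mem_filter]
      constructor
      · intro hb
        rcases Finset.mem_union.1 (hB hb) with h | h
        · exact Or.inl ⟨hb, h⟩
        · obtain ⟨i, hi, rfl⟩ := Finset.mem_image.1 h
          exact Or.inr ⟨i, ⟨hi, hb⟩, rfl⟩
      · rintro (h | ⟨i, ⟨_, h⟩, rfl⟩)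
        · exact h.1
        · exact h
    have hinjS : Set.InjOn (xel d u y) S := hinj.mono (by exact_mod_cast hSs)
    have hdis : Disjoint (B ∩ A) (S.image (xel d u y)) :=
      Finset.disjoint_of_subset_left Finset.inter_subset_right
        (Finset.disjoint_of_subset_right (Finset.image_subset_image hSs) hAN)
    refine ⟨hBe, ?_, ?_⟩
    · conv_lhs => rw [hBe]
      rw [Finset.card_union_of_disjoint hdis, Finset.card_image_of_injOn hinjS]
    · conv_lhs => rw [hBe]
      rw [Finset.sum_union hdis, Finset.sum_image hinjS, xel_sum]; ring
  have key : ∀ B ⊆ A ∪ N, ∀ C ⊆ A ∪ N, B.card = C.card → B.card ≤ d + 1 →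
      ∑ b ∈ B, b = ∑ b ∈ C, b →
      B = C ∨ (B.card = d+1 ∧ (B ⊆ A ∨ B = N)) := by
    intro B hB C hC hcard hle hsum
    obtain ⟨S, hS, X, hX, hBe, hBc, hBs⟩ := dec B hB
    obtain ⟨T, hT, Y, hY, hCe, hCc, hCs⟩ := dec C hC
    have hL : ∑ i ∈ S, lam d i = ∑ i ∈ T, lam d i := by
      by_contra hne
      rcases Finset.eq_empty_or_nonempty S with h0 | h0
      · have h1 : T.Nonempty := by
          rw [Finset.nonempty_iff_ne_empty]; rintro rfl; exact hne (by rw [h0])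
        have := h1.card_pos
        refine hy T hT S hS Y hY (by omega) _ (hW1 S hS X hX (by omega)) (Ne.symm hne) ?_
        linarith
      · have := h0.card_pos
        refine hy S hS T hT X hX (by omega) _ (hW1 T hT Y hY (by omega)) hne ?_
        linarith
    rcases lam_inj d S T hS hT hL with h | ⟨h1, h2⟩ | ⟨h1, h2⟩
    · subst h
      by_cases hXc : X.card < d + 1
      · left
        have : X = Y := hsid X Y hX hY (by omega) hXc (by linarith)
        rw [hBe, hCe, this]
      · right
        have : S = ∅ := by rw [← Finset.card_eq_zero]; omega
        refine ⟨by omega, Or.inl ?_⟩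
        rw [hBe, this]; simpa using hX
    · right
      have h3 : T.card = d + 1 := by rw [h2]; simp
      refine ⟨by omega, Or.inl ?_⟩
      rw [hBe, h1]; simpa using hX
    · right
      have h3 : S.card = d + 1 := by rw [h1]; simp
      have h4 : X = ∅ := by rw [← Finset.card_eq_zero]; omega
      refine ⟨by omega, Or.inr ?_⟩
      rw [hBe, h1, h4]; simp [hN]
  refine ⟨A ∪ N, rfl, ?_, ?_, ?_, ?_, ?_⟩
  · rw [Finset.card_union_of_disjoint hAN, hNc]
  · rw [Finset.disjoint_union_left]; exact ⟨hAF, hNF⟩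
  · intro B C hB hC hc hlt hs
    rcases key B hB C hC hc hlt.le hs with h | h
    · exact h
    · omega
  · intro n
    by_cases hall : ∀ B ∈ reps (d+1) (A ∪ N) n, B ⊆ A ∨ B = N
    · by_cases hn : n = u
      · subst hn
        have hsub : reps (d+1) (A ∪ N) n ⊆ insert N (reps (d+1) A n) := by
          intro B hB
          have hB' := mem_reps.1 hB
          rcases hall B hB with h | h
          · exact Finset.mem_insert_of_mem (mem_reps.2 ⟨h, hB'.2⟩)
          · rw [h]; exact Finset.mem_insert_self _ _
        have hc := (Finset.card_le_card hsub).trans (Finset.card_insert_le _ _)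
        calc ((reps (d+1) (A ∪ N) n).card : ℕ∞) ≤ (((reps (d+1) A n).card + 1 : ℕ) : ℕ∞) := by
              exact_mod_cast hc
          _ ≤ f n := by push_cast; exact Order.add_one_le_of_lt hu
      · have hsub : reps (d+1) (A ∪ N) n ⊆ reps (d+1) A n := by
          intro B hB
          have hB' := mem_reps.1 hB
          rcases hall B hB with h | h
          · exact mem_reps.2 ⟨h, hB'.2⟩
          · exfalso; apply hn; rw [← hB'.2.2, h, hNs]
        refine le_trans ?_ (hrf n)
        exact_mod_cast Finset.card_le_card hsub
    · push Not at hall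
      obtain ⟨B, hB, hBA, hBN⟩ := hall
      have hB' := mem_reps.1 hB
      have hone : (reps (d+1) (A ∪ N) n).card ≤ 1 := by
        rw [Finset.card_le_one_iff_subset_singleton]
        refine ⟨B, ?_⟩
        intro C hC
        have hC' := mem_reps.1 hC
        rcases key B hB'.1 C hC'.1 (by rw [hB'.2.1, hC'.2.1]) hB'.2.1.le
          (by rw [hB'.2.2, hC'.2.2]) with h | ⟨_, h | h⟩
        · simp [h]
        · exact absurd h hBA
        · exact absurd h hBN
      have hfn : f n ≠ 0 := by
        intro h0
        obtain ⟨S, hS, X, hX, hBe, hBc, hBs⟩ := dec B hB'.1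
        have hS0 : S ≠ ∅ := by
          rintro rfl
          apply hBA; rw [hBe]; simpa using hX
        have hpos := (Finset.nonempty_iff_ne_empty.2 hS0).card_pos
        refine hy S hS ∅ (by simp) X hX (by omega) n (hW2 (hZ n h0)) ?_ ?_
        · intro hl
          rcases lam_inj d S ∅ hS (by simp) hl with h | ⟨h, _⟩ | ⟨h, _⟩
          · exact hS0 h
          · exact hS0 h
          · have h3 : S.card = d + 1 := by rw [h]; simp
            have h4 : X = ∅ := by rw [← Finset.card_eq_zero]; omega
            apply hBN
            rw [hBe, h, h4]; simp [hN]
        · rw [← hBs, hB'.2.2]; simp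
      calc ((reps (d+1) (A ∪ N) n).card : ℕ∞) ≤ 1 := by exact_mod_cast hone
        _ ≤ f n := Order.one_le_iff_ne_zero.2 hfn
  · apply Finset.card_lt_card
    rw [Finset.ssubset_iff_of_subset]
    · refine ⟨N, mem_reps.2 ⟨Finset.subset_union_right, hNc, hNs⟩, ?_⟩
      intro h
      have h1 := (mem_reps.1 h).1
      have h2 : N = ∅ := by
        rw [← Finset.disjoint_self_iff_empty]; exact Finset.disjoint_of_subset_left h1 hAN
      rw [h2] at hNc; simp at hNc
    · intro B hB
      have := mem_reps.1 hB
      exact mem_reps.2 ⟨this.1.trans Finset.subset_union_left, this.2⟩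

lemma full_step (d : ℕ) (hd : 1 ≤ d) (f : ℤ → ℕ∞) (Z : Finset ℤ) (hZ : ∀ z, f z = 0 → z ∈ Z) (D : ℕ) :
    ∃ C : ℕ, 1 ≤ C ∧ ∀ (k : ℕ) (A F : Finset ℤ) (u : ℤ), A.card = (d+1) * k → F.card ≤ k + 1 →
      |u| ≤ ((D * (k+1) ^ (2*d+1) : ℕ) : ℤ) →
      Disjoint A F → Sid (d+1) A → (∀ n, ((reps (d+1) A n).card : ℕ∞) ≤ f n) →
      ((reps (d+1) A u).card : ℕ∞) < f u →
      ∃ A' : Finset ℤ, A ⊆ A' ∧ A'.card = (d+1) * (k+1) ∧ Disjoint A' F ∧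
      Sid (d+1) A' ∧ (∀ n, ((reps (d+1) A' n).card : ℕ∞) ≤ f n) ∧
      (reps (d+1) A u).card < (reps (d+1) A' u).card ∧
      ∀ a ∈ A', a ∉ A → |a| ≤ ((C * (k+1) ^ (2*d+1) : ℕ) : ℤ) := by
  let c1 : ℕ := 2 ^ (d+1) * ((d+2) * (d+1) ^ (d+1)) + Z.card + 1
  let c2 : ℕ := 2 ^ (d+1) * 2 ^ (d+1) * ((d+1) * (d+1) ^ d) * c1 + 1
  refine ⟨2 ^ d * c2 + D, ?_, ?_⟩
  · have : 1 ≤ 2 ^ d * c2 := Nat.mul_pos (by positivity) (Nat.succ_pos _)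
    omega
  intro k A F u hA hF hu hAF hsid hrf hdef
  let W : Finset ℤ := (((Finset.range (d+1)).powerset ×ˢ smallSub A (d+1)).image
    (fun p => Msum d u p.1 + ∑ b ∈ p.2, b)) ∪ Z ∪ F
  obtain ⟨y, hy1, hy2, hy3⟩ := exists_y d A W (Msum d u)
  have hm : A.card + 1 ≤ (d+1) * (k+1) := by rw [hA]; nlinarith
  have hq : ∀ a : ℕ, 1 ≤ (k+1) ^ a := fun a => Nat.one_le_pow _ _ (Nat.succ_pos _)
  have hWc : W.card ≤ c1 * (k+1) ^ (d+1) := by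
    have h1 : W.card ≤ 2 ^ (d+1) * ((d+2) * (A.card + 1) ^ (d+1)) + Z.card + F.card := by
      refine (Finset.card_union_le _ _).trans ?_
      gcongr
      refine (Finset.card_union_le _ _).trans ?_
      gcongr
      refine Finset.card_image_le.trans ?_
      rw [Finset.card_product, Finset.card_powerset, Finset.card_range]
      gcongr
      exact card_smallSub A (d+1)
    have h2 : Z.card ≤ Z.card * (k+1) ^ (d+1) := Nat.le_mul_of_pos_right _ (hq _)
    have h3 : F.card ≤ (k+1) ^ (d+1) := hF.trans (Nat.le_self_pow (by omega) _)
    have h4 : (A.card + 1) ^ (d+1) ≤ (d+1) ^ (d+1) * (k+1) ^ (d+1) := by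
      rw [← mul_pow]; exact Nat.pow_le_pow_left hm _
    calc W.card ≤ 2 ^ (d+1) * ((d+2) * ((d+1) ^ (d+1) * (k+1) ^ (d+1))) + Z.card * (k+1) ^ (d+1)
            + (k+1) ^ (d+1) := by
          refine h1.trans ?_
          gcongr
      _ = _ := by simp only [c1]; ring
  have hyb : y ≤ ((c2 * (k+1) ^ (2*d+1) : ℕ) : ℤ) := by
    refine hy2.trans ?_
    have h4 : (A.card + 1) ^ d ≤ (d+1) ^ d * (k+1) ^ d := by
      rw [← mul_pow]; exact Nat.pow_le_pow_left hm _
    have : 2 ^ (d+1) * 2 ^ (d+1) * ((d+1) * (A.card + 1) ^ d) * W.card + 1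
        ≤ c2 * (k+1) ^ (2*d+1) := by
      calc _ ≤ 2 ^ (d+1) * 2 ^ (d+1) * ((d+1) * ((d+1) ^ d * (k+1) ^ d)) * (c1 * (k+1) ^ (d+1))
            + (k+1) ^ (2*d+1) := by
            gcongr
            exact hq _
        _ = _ := by simp only [c2]; ring
    exact_mod_cast this
  obtain ⟨A', hA', h1, h2, h3, h4, h5⟩ := key_step d hd f Z hZ A F W u y hAF hsid hrf hdef
    (by
      intro T hT Y hY hYc
      simp only [W, Finset.mem_union]
      left; left
      exact Finset.mem_image.2 ⟨(T, Y), by simp [mem_smallSub, hYc, hY]; simpa using hT, rfl⟩)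
    (fun z hz => by simp [W, hz]) (fun z hz => by simp [W, hz]) hy3
  refine ⟨A', by rw [hA']; exact Finset.subset_union_left, by rw [h1, hA]; ring, h2, h3, h4, h5, ?_⟩
  intro a ha haA
  rw [hA', Finset.mem_union] at ha
  rcases ha with ha | ha
  · exact absurd ha haA
  obtain ⟨i, hi, rfl⟩ := Finset.mem_image.1 ha
  refine (xel_bound d u y hy1 i (Finset.mem_range.1 hi)).trans ?_
  push_cast at hu hyb ⊢
  have : (2:ℤ) ^ d * y ≤ 2 ^ d * (c2 * (k+1) ^ (2*d+1)) := by gcongr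
  calc _ ≤ (2:ℤ) ^ d * (c2 * (k+1) ^ (2*d+1)) + D * (k+1) ^ (2*d+1) := by gcongr
    _ = _ := by ring

lemma fresh (d : ℕ) (f : ℤ → ℕ∞) (Z : Finset ℤ) (hZ : ∀ z, f z = 0 → z ∈ Z) (k : ℕ) (A : Finset ℤ)
    (hA : A.card = (d+1) * k) :
    ∃ u : ℤ, |u| ≤ ((((d+1) ^ (d+1) + Z.card + 1) * (k+1) ^ (2*d+1) : ℕ) : ℤ) ∧
      ((reps (d+1) A u).card : ℕ∞) < f u := by
  let V : Finset ℤ := (A.powersetCard (d+1)).image (fun B => ∑ b ∈ B, b) ∪ Z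
  have hV : V.card ≤ ((d+1) ^ (d+1) + Z.card + 1) * (k+1) ^ (2*d+1) := by
    have h1 : V.card ≤ A.card ^ (d+1) + Z.card := by
      refine (Finset.card_union_le _ _).trans ?_
      gcongr
      refine Finset.card_image_le.trans ?_
      rw [Finset.card_powersetCard]
      exact Nat.choose_le_pow _ _
    have hq : ∀ a : ℕ, 1 ≤ (k+1) ^ a := fun a => Nat.one_le_pow _ _ (Nat.succ_pos _)
    have h2 : Z.card ≤ Z.card * (k+1) ^ (2*d+1) := Nat.le_mul_of_pos_right _ (hq _)
    have h3 : A.card ^ (d+1) ≤ (d+1) ^ (d+1) * (k+1) ^ (2*d+1) := by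
      rw [hA, mul_pow]
      refine Nat.mul_le_mul_left _ ?_
      exact (Nat.pow_le_pow_left (Nat.le_succ k) _).trans
        (Nat.pow_le_pow_right (Nat.succ_pos _) (by omega))
    have := hq (2*d+1)
    nlinarith
  have hc : V.card < (Finset.Icc (0:ℤ) V.card).card := by simp
  obtain ⟨u, hu, hn⟩ := Finset.exists_mem_notMem_of_card_lt_card hc
  rw [Finset.mem_Icc] at hu
  refine ⟨u, ?_, ?_⟩
  · rw [abs_of_nonneg hu.1]
    exact hu.2.trans (by exact_mod_cast hV)
  · have h0 : reps (d+1) A u = ∅ := by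
      rw [Finset.eq_empty_iff_forall_notMem]
      intro B hB
      have hB' := mem_reps.1 hB
      apply hn
      simp only [V, Finset.mem_union]
      left
      exact Finset.mem_image.2 ⟨B, Finset.mem_powersetCard.2 ⟨hB'.1, hB'.2.1⟩, hB'.2.2⟩
    rw [h0]
    have : f u ≠ 0 := fun h => hn (by simp [V, hZ u h])
    simpa using pos_iff_ne_zero.2 this

def tseq (k : ℕ) : ℤ :=
  ((Nat.unpair (Nat.unpair k).1).1 : ℤ) - ((Nat.unpair (Nat.unpair k).1).2 : ℤ)

lemma tseq_abs (k : ℕ) : |tseq k| ≤ k := by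
  have h1 := Nat.unpair_left_le k
  have h2 := Nat.unpair_left_le (Nat.unpair k).1
  have h3 := Nat.unpair_right_le (Nat.unpair k).1
  rw [abs_le]; unfold tseq; omega

lemma tseq_inf (n : ℤ) (K : ℕ) : ∃ k, K ≤ k ∧ tseq k = n := by
  refine ⟨Nat.pair (Nat.pair n.toNat (-n).toNat) K, Nat.right_le_pair _ _, ?_⟩
  simp only [tseq, Nat.unpair_pair]; omega

structure StInv_s6 (d C : ℕ) (f : ℤ → ℕ∞) (k : ℕ) (s : Finset ℤ × Finset ℤ) : Prop where
  card : s.1.card = (d+1) * k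
  cardF : s.2.card ≤ k
  disj : Disjoint s.1 s.2
  sid : Sid (d+1) s.1
  le : ∀ n, ((reps (d+1) s.1 n).card : ℕ∞) ≤ f n
  bd : ∀ a ∈ s.1, |a| ≤ ((C * k ^ (2*d+1) : ℕ) : ℤ)

structure StRel (d : ℕ) (f : ℤ → ℕ∞) (E : ℕ → Set ℤ) (k : ℕ) (s t : Finset ℤ × Finset ℤ) : Prop where
  sub : s.1 ⊆ t.1
  subF : s.2 ⊆ t.2
  inc : ((reps (d+1) s.1 (tseq k)).card : ℕ∞) < f (tseq k) →
    (reps (d+1) s.1 (tseq k)).card < (reps (d+1) t.1 (tseq k)).card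
  enemy : E k ⊆ s.1 ∨ ∃ e ∈ E k, e ∈ t.2

lemma inv_step (d : ℕ) (hd : 1 ≤ d) (f : ℤ → ℕ∞) (Z : Finset ℤ) (hZ : ∀ z, f z = 0 → z ∈ Z)
    (E : ℕ → Set ℤ) :
    ∃ C : ℕ, 1 ≤ C ∧ ∀ k s, StInv_s6 d C f k s → ∃ t, StInv_s6 d C f (k+1) t ∧ StRel d f E k s t := by
  obtain ⟨C, hC, H⟩ := full_step d hd f Z hZ ((d+1) ^ (d+1) + Z.card + 1)
  refine ⟨C, hC, ?_⟩
  rintro k ⟨A, F⟩ hI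
  obtain ⟨F', hF1, hF2, hF3, hF4⟩ : ∃ F' : Finset ℤ, F ⊆ F' ∧ F'.card ≤ k + 1 ∧ Disjoint A F' ∧
      (E k ⊆ A ∨ ∃ e ∈ E k, e ∈ F') := by
    by_cases hE : E k ⊆ A
    · exact ⟨F, subset_rfl, hI.cardF.trans (Nat.le_succ _), hI.disj, Or.inl hE⟩
    · obtain ⟨e, he, heA⟩ := Set.not_subset.1 hE
      refine ⟨insert e F, Finset.subset_insert _ _, (Finset.card_insert_le _ _).trans
        (Nat.succ_le_succ hI.cardF), ?_, Or.inr ⟨e, he, by simp⟩⟩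
      rw [Finset.disjoint_insert_right]
      exact ⟨by simpa using heA, hI.disj⟩
  obtain ⟨u, hub, hud, hut⟩ : ∃ u : ℤ,
      |u| ≤ ((((d+1) ^ (d+1) + Z.card + 1) * (k+1) ^ (2*d+1) : ℕ) : ℤ) ∧
      ((reps (d+1) A u).card : ℕ∞) < f u ∧
      (((reps (d+1) A (tseq k)).card : ℕ∞) < f (tseq k) → u = tseq k) := by
    by_cases ht : ((reps (d+1) A (tseq k)).card : ℕ∞) < f (tseq k)
    · refine ⟨tseq k, (tseq_abs k).trans ?_, ht, fun _ => rfl⟩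
      have h1 : k + 1 ≤ (k+1) ^ (2*d+1) := Nat.le_self_pow (by omega) _
      have h2 : k ≤ ((d+1) ^ (d+1) + Z.card + 1) * (k+1) ^ (2*d+1) := by
        have : (k+1) ^ (2*d+1) ≤ ((d+1) ^ (d+1) + Z.card + 1) * (k+1) ^ (2*d+1) :=
          Nat.le_mul_of_pos_left _ (Nat.succ_pos _)
        omega
      exact_mod_cast h2
    · obtain ⟨u, h1, h2⟩ := fresh d f Z hZ k A hI.card
      exact ⟨u, h1, h2, fun h => absurd h ht⟩
  obtain ⟨A', h1, h2, h3, h4, h5, h6, h7⟩ := H k A F' u hI.card hF2 hub hF3 hI.sid hI.le hud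
  refine ⟨(A', F'), ⟨h2, hF2, h3, h4, h5, ?_⟩, ⟨h1, hF1, ?_, hF4⟩⟩
  · intro a ha
    by_cases haA : a ∈ A
    · refine (hI.bd a haA).trans ?_
      have : C * k ^ (2*d+1) ≤ C * (k+1) ^ (2*d+1) := by gcongr; omega
      exact_mod_cast this
    · exact h7 a ha haA
  · intro ht
    have := hut ht
    subst this
    exact h6

lemma stInv_zero (d C : ℕ) (f : ℤ → ℕ∞) : StInv_s6 d C f 0 (∅, ∅) where
  card := by simp
  cardF := by simp
  disj := by simp
  sid := by
    intro B C hB hC _ _ _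
    rw [Finset.subset_empty.1 hB, Finset.subset_empty.1 hC]
  le := by
    intro n
    have : reps (d+1) ∅ n = ∅ := by
      rw [Finset.eq_empty_iff_forall_notMem]
      intro B hB
      have hB' := mem_reps.1 hB
      have h0 := Finset.subset_empty.1 hB'.1
      have h1 := hB'.2.1
      rw [h0] at h1; simp at h1
    simp [this]
  bd := by simp

lemma exists_seq (d C : ℕ) (f : ℤ → ℕ∞) (E : ℕ → Set ℤ)
    (H : ∀ k s, StInv_s6 d C f k s → ∃ t, StInv_s6 d C f (k+1) t ∧ StRel d f E k s t) :
    ∃ s : ℕ → Finset ℤ × Finset ℤ, ∀ k, StInv_s6 d C f k (s k) ∧ StRel d f E k (s k) (s (k+1)) := by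
  choose g hg1 hg2 using H
  let s : ∀ k, {s // StInv_s6 d C f k s} := fun k =>
    Nat.rec ⟨(∅, ∅), stInv_zero d C f⟩ (fun k s => ⟨g k s.1 s.2, hg1 k s.1 s.2⟩) k
  exact ⟨fun k => (s k).1, fun k => ⟨(s k).2, hg2 k (s k).1 (s k).2⟩⟩

lemma repHres_eq (h : ℕ) (A : Set ℤ) (n : ℤ) :
    repHres h A n = {B : Finset ℤ | ↑B ⊆ A ∧ B.card = h ∧ ∑ b ∈ B, b = n}.encard := by
  unfold repHres
  refine Set.encard_congr ?_
  refine Equiv.ofBijective (fun a => ⟨Finset.univ.image a.1, ?_, ?_, ?_⟩) ⟨?_, ?_⟩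
  · intro b hb
    simp at hb
    obtain ⟨i, rfl⟩ := hb
    exact a.2.1 i
  · rw [Finset.card_image_of_injective _ a.2.2.1.injective]; simp
  · rw [Finset.sum_image (a.2.2.1.injective.injOn)]; exact a.2.2.2
  · rintro ⟨a, ha⟩ ⟨b, hb⟩ he
    simp only [Subtype.mk.injEq] at he ⊢
    have := congrArg (fun s : Finset ℤ => (s : Set ℤ)) he
    simp at this
    exact (StrictMono.range_inj ha.2.1 hb.2.1).1 this
  · rintro ⟨B, hB, hc, hs⟩
    have him : Finset.univ.image (B.orderEmbOfFin hc) = B := by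
      apply Finset.coe_injective; simp
    refine ⟨⟨B.orderEmbOfFin hc, fun i => hB (by simp), (B.orderEmbOfFin hc).strictMono, ?_⟩, ?_⟩
    · rw [← hs]; conv_rhs => rw [← him]
      rw [Finset.sum_image ((B.orderEmbOfFin hc).injective.injOn)]
    · simpa using him

theorem stmt6 (h : ℕ) (hh : 2 ≤ h) (f : ℤ → ℕ∞) (hf : (f ⁻¹' {0}).Finite) :
    ¬ Set.Countable {A : Set ℤ |
      (∀ n : ℤ, repHres h A n = f n) ∧
      ∃ c₀ x₀ : ℝ, 0 < c₀ ∧ ∀ x : ℝ, x₀ ≤ x →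
        c₀ * x ^ ((1 : ℝ) / (2 * (h : ℝ) - 1)) ≤
          ({a : ℤ | a ∈ A ∧ |(a : ℝ)| ≤ x}.ncard : ℝ)} := by
  intro hcount
  obtain ⟨E, hE⟩ := Set.countable_iff_exists_subset_range.1 hcount
  obtain ⟨d, rfl⟩ : ∃ d, h = d + 1 := ⟨h - 1, by omega⟩
  have hd : 1 ≤ d := by omega
  obtain ⟨C, hC, H⟩ := inv_step d hd f hf.toFinset (by intro z hz; simp [hz]) E
  obtain ⟨s, hs⟩ := exists_seq d C f E H
  have mono1 : Monotone (fun k => (s k).1) := monotone_nat_of_le_succ fun k => (hs k).2.sub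
  have mono2 : Monotone (fun k => (s k).2) := monotone_nat_of_le_succ fun k => (hs k).2.subF
  let A : Set ℤ := ⋃ k, ((s k).1 : Set ℤ)
  have hsub : ∀ k, ((s k).1 : Set ℤ) ⊆ A := fun k => Set.subset_iUnion (fun k => ((s k).1 : Set ℤ)) k
  have hfin : ∀ B : Finset ℤ, (B : Set ℤ) ⊆ A → ∃ k, B ⊆ (s k).1 := by
    intro B
    induction B using Finset.induction_on with
    | empty => intro _; exact ⟨0, by simp⟩
    | insert a B _ ih =>
      intro hB
      rw [Finset.coe_insert, Set.insert_subset_iff] at hB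
      obtain ⟨k, hk⟩ := ih hB.2
      obtain ⟨l, hl⟩ := Set.mem_iUnion.1 hB.1
      refine ⟨max k l, Finset.insert_subset ?_ ?_⟩
      · exact mono1 (le_max_right k l) (by exact_mod_cast hl)
      · exact hk.trans (mono1 (le_max_left k l))
  have repsmono : ∀ n, Monotone (fun k => reps (d+1) (s k).1 n) := by
    intro n k l hkl B hB
    have := mem_reps.1 hB
    exact mem_reps.2 ⟨this.1.trans (mono1 hkl), this.2⟩
  have hrA : ∀ n, repHres (d+1) A n = f n := by
    intro n
    rw [repHres_eq]
    set R := {B : Finset ℤ | ↑B ⊆ A ∧ B.card = d+1 ∧ ∑ b ∈ B, b = n} with hR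
    have hle : ∀ k, ((reps (d+1) (s k).1 n).card : ℕ∞) ≤ R.encard := by
      intro k
      rw [← Set.encard_coe_eq_coe_finsetCard]
      apply Set.encard_le_encard
      intro B hB
      have hB' := mem_reps.1 (Finset.mem_coe.1 hB)
      exact ⟨(Finset.coe_subset.2 hB'.1).trans (hsub k), hB'.2⟩
    apply le_antisymm
    · by_contra hlt
      push Not at hlt
      obtain ⟨m, hm⟩ := ENat.ne_top_iff_exists.1 (ne_top_of_lt hlt)
      have h1 : ((m + 1 : ℕ) : ℕ∞) ≤ R.encard := by
        push_cast; rw [hm]; exact Order.add_one_le_of_lt hlt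
      obtain ⟨t, htR, htc⟩ := Set.exists_subset_encard_eq h1
      have htf : t.Finite := Set.finite_of_encard_eq_coe htc
      obtain ⟨k, hk⟩ : ∃ k, t ⊆ (reps (d+1) (s k).1 n : Set (Finset ℤ)) := by
        have : ∀ u : Finset (Finset ℤ), (u : Set (Finset ℤ)) ⊆ R → ∃ k, u ⊆ reps (d+1) (s k).1 n := by
          intro u
          induction u using Finset.induction_on with
          | empty => intro _; exact ⟨0, by simp⟩
          | insert a B _ ih =>
            intro hB
            rw [Finset.coe_insert, Set.insert_subset_iff] at hB
            obtain ⟨k, hk⟩ := ih hB.2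
            obtain ⟨l, hl⟩ := hfin a hB.1.1
            refine ⟨max k l, Finset.insert_subset ?_ ?_⟩
            · exact repsmono n (le_max_right k l) (mem_reps.2 ⟨hl, hB.1.2⟩)
            · exact hk.trans (repsmono n (le_max_left k l))
        obtain ⟨k, hk⟩ := this htf.toFinset (by simpa using htR)
        exact ⟨k, fun B hB => by exact_mod_cast hk (by simpa using hB)⟩
      have h2 := Set.encard_le_encard hk
      rw [htc, Set.encard_coe_eq_coe_finsetCard] at h2
      have h3 := h2.trans ((hs k).1.le n)
      rw [← hm] at h3
      have : m + 1 ≤ m := by exact_mod_cast h3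
      omega
    · by_contra hlt
      push Not at hlt
      obtain ⟨m, hm⟩ := ENat.ne_top_iff_exists.1 (ne_top_of_lt hlt)
      have hgrow : ∀ j, ∃ k, j ≤ (reps (d+1) (s k).1 n).card := by
        intro j
        induction j with
        | zero => exact ⟨0, by simp⟩
        | succ j ih =>
          obtain ⟨k, hk⟩ := ih
          obtain ⟨l, hl, ht⟩ := tseq_inf n k
          have h1 := (hs l).2.inc (by rw [ht]; exact (hle l).trans_lt hlt)
          rw [ht] at h1
          have h2 := Finset.card_le_card (repsmono n hl)
          simp only at h2
          exact ⟨l + 1, by omega⟩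
      obtain ⟨k, hk⟩ := hgrow (m+1)
      have h2 := hle k
      rw [← hm] at h2
      have : (reps (d+1) (s k).1 n).card ≤ m := by exact_mod_cast h2
      omega
  have hmem : A ∈ Set.range E := by
    apply hE
    refine ⟨hrA, ?_⟩
    have hC0 : (0:ℝ) < C := by exact_mod_cast hC
    have hexp : (2 * ((d + 1 : ℕ) : ℝ) - 1) = ((2*d+1 : ℕ) : ℝ) := by push_cast; ring
    set e : ℝ := (1 : ℝ) / (2 * ((d + 1 : ℕ) : ℝ) - 1) with he
    have he' : e = ((2*d+1 : ℕ) : ℝ)⁻¹ := by rw [he, hexp, one_div]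
    have hepos : 0 < e := by rw [he']; positivity
    refine ⟨(1/2) * (1 / C) ^ e, C, by positivity, ?_⟩
    intro x hx
    have hx0 : 0 < x := hC0.trans_le hx
    have hmulp : (1 / (C:ℝ)) ^ e * x ^ e = (x / C) ^ e := by
      rw [← Real.mul_rpow (by positivity) hx0.le]; congr 1; ring
    set z := (x / C) ^ e with hz
    have hz1 : 1 ≤ z := Real.one_le_rpow (by rw [le_div_iff₀ hC0]; linarith) hepos.le
    have hzp : z ^ (2*d+1) = x / C := by
      rw [hz, he']; exact Real.rpow_inv_natCast_pow (by positivity) (by omega)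
    set k := ⌊z⌋₊ with hk
    have hk1 : (k:ℝ) ≤ z := Nat.floor_le (by linarith)
    have hk2 : z < k + 1 := Nat.lt_floor_add_one z
    have hk3 : 1 ≤ k := Nat.le_floor (by simpa using hz1)
    have hk3' : (1:ℝ) ≤ k := by exact_mod_cast hk3
    have hsubx : ((s k).1 : Set ℤ) ⊆ {a : ℤ | a ∈ A ∧ |(a : ℝ)| ≤ x} := by
      intro a ha
      refine ⟨hsub k ha, ?_⟩
      have h1 : ((|a| : ℤ) : ℝ) ≤ (((C * k ^ (2*d+1) : ℕ) : ℤ) : ℝ) := by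
        exact_mod_cast (hs k).1.bd a (by exact_mod_cast ha)
      push_cast at h1
      refine h1.trans ?_
      calc (C:ℝ) * k ^ (2*d+1) ≤ C * z ^ (2*d+1) := by gcongr
        _ = x := by rw [hzp]; field_simp
    have hfinx : {a : ℤ | a ∈ A ∧ |(a : ℝ)| ≤ x}.Finite := by
      refine (Set.finite_Icc (-⌈x⌉) ⌈x⌉).subset ?_
      rintro a ⟨_, ha⟩
      have h1 := abs_le.1 ha
      have h2 := Int.le_ceil x
      constructor
      · have : ((-⌈x⌉ : ℤ) : ℝ) ≤ a := by push_cast; linarith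
        exact_mod_cast this
      · have : (a : ℝ) ≤ (⌈x⌉ : ℤ) := by linarith
        exact_mod_cast this
    have hcard := Set.ncard_le_ncard hsubx hfinx
    rw [Set.ncard_coe_finset, (hs k).1.card] at hcard
    have hkle : k ≤ (d+1) * k := Nat.le_mul_of_pos_left _ (Nat.succ_pos _)
    have hfinal : (k:ℝ) ≤ ({a : ℤ | a ∈ A ∧ |(a : ℝ)| ≤ x}.ncard : ℝ) := by
      exact_mod_cast hkle.trans hcard
    refine le_trans ?_ hfinal
    rw [mul_assoc, hmulp]
    linarith
  obtain ⟨j, hj⟩ := hmem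
  rcases (hs j).2.enemy with h1 | ⟨e, he1, he2⟩
  · rw [hj] at h1
    have h2 : (s (j+1)).1 ⊆ (s j).1 := by
      have := (hsub (j+1)).trans h1
      exact_mod_cast this
    have h3 := Finset.card_le_card h2
    rw [(hs j).1.card, (hs (j+1)).1.card] at h3
    have := Nat.le_of_mul_le_mul_left h3 (Nat.succ_pos d)
    omega
  · rw [hj] at he1
    obtain ⟨l, hl⟩ := Set.mem_iUnion.1 he1
    have hd1 := (hs (max (j+1) l)).1.disj
    rw [Finset.disjoint_left] at hd1
    exact hd1 (mono1 (le_max_right (j+1) l) (by exact_mod_cast hl))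
      (mono2 (le_max_left (j+1) l) he2)
end

section
/- Let f : ℤ → ℕ ∪ {∞} be a function with Δ = card(f⁻¹(0)) finite, and let u be an integer with f(u) ≥ 1 and |u| ≤ (1 + Δ)/2. Then there exists an integer a with |a| ≤ 1 + Δ such that the set A = {a + u, −a} has exactly two elements, r_{A,2}(n) ≤ f(n) for all integers n, and r_{A,2}(u) ≥ 1. -/
theorem stmt11 (f : ℤ → ℕ∞) (hf : (f ⁻¹' {0}).Finite) (Δ : ℕ)
    (hΔ : (f ⁻¹' {0}).ncard = Δ) (u : ℤ)
    (hu1 : 1 ≤ f u) (hu2 : 2 * |u| ≤ 1 + (Δ : ℤ)) :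
    ∃ a : ℤ, |a| ≤ 1 + (Δ : ℤ) ∧
      ({a + u, -a} : Set ℤ).ncard = 2 ∧
      (∀ n : ℤ, rep2 {a + u, -a} n ≤ f n) ∧
      1 ≤ rep2 {a + u, -a} u := by
  classical
  set Z := hf.toFinset with hZ
  have hmem : ∀ z, z ∈ Z ↔ f z = 0 := by intro z; simp [hZ]
  have hcard : Z.card = Δ := by
    rw [← hΔ, Set.ncard_eq_toFinset_card _ hf]
  have hlt : (Z.image (fun z => -(z / 2)) ∪ Z.image (fun z => z / 2 - u) ∪ {-(u / 2)}).card
      < (Finset.Icc (-(1 + (Δ : ℤ))) (1 + (Δ : ℤ))).card := by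
    have h1 := Finset.card_union_le
      (Z.image (fun z => -(z / 2)) ∪ Z.image (fun z => z / 2 - u)) {-(u / 2)}
    have h2 := Finset.card_union_le (Z.image (fun z => -(z / 2))) (Z.image (fun z => z / 2 - u))
    have h3 := Finset.card_image_le (s := Z) (f := fun z => -(z / 2))
    have h4 := Finset.card_image_le (s := Z) (f := fun z => z / 2 - u)
    rw [Finset.card_singleton] at h1
    rw [Int.card_Icc]
    omega
  obtain ⟨a, ha, hna⟩ := Finset.exists_mem_notMem_of_card_lt_card hlt
  simp only [Finset.mem_union, Finset.mem_image, Finset.mem_singleton, not_or, not_exists,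
    not_and, hmem] at hna
  obtain ⟨⟨hA, hB⟩, hC⟩ := hna
  rw [Finset.mem_Icc] at ha
  have hne : a + u ≠ -a := by omega
  have fA : f (-2 * a) ≠ 0 := fun h => hA _ h (by omega)
  have fB : f (2 * a + 2 * u) ≠ 0 := fun h => hB _ h (by omega)
  have fu : f u ≠ 0 := by
    intro h
    simp [h] at hu1
  refine ⟨a, abs_le.2 ha, Set.ncard_pair hne, ?_, ?_⟩
  · intro n
    unfold rep2
    rcases Set.eq_empty_or_nonempty
      {p : ℤ × ℤ | p.1 ∈ ({a + u, -a} : Set ℤ) ∧ p.2 ∈ ({a + u, -a} : Set ℤ) ∧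
        p.1 ≤ p.2 ∧ p.1 + p.2 = n} with h | ⟨⟨x, y⟩, hx, hy, -, hn⟩
    · rw [h]; simp
    · have hfn : f n ≠ 0 := by
        simp only [Set.mem_insert_iff, Set.mem_singleton_iff] at hx hy hn
        have : n = -2 * a ∨ n = 2 * a + 2 * u ∨ n = u := by omega
        rcases this with h | h | h <;> rw [h] <;> assumption
      refine le_trans ?_ (Order.one_le_iff_pos.2 (pos_iff_ne_zero.2 hfn))
      rw [Set.encard_le_one_iff]
      rintro ⟨p, q⟩ ⟨r, s⟩ ⟨h1, h2, h3, h4⟩ ⟨k1, k2, k3, k4⟩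
      simp only [Set.mem_insert_iff, Set.mem_singleton_iff] at h1 h2 h3 h4 k1 k2 k3 k4
      rw [Prod.mk.injEq]
      omega
  · unfold rep2
    rw [Set.one_le_encard_iff_nonempty]
    rcases le_total (a + u) (-a) with h | h
    · exact ⟨(a + u, -a), by simp, by simp, h, by simp⟩
    · exact ⟨(-a, a + u), by simp, by simp, h, by simp⟩
end
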